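/- arXiv:1409.3702 — 9 statements merged into one kernel-verified Lean document; each statement's English description precedes it below -/
import Mathlib

section
/- Let G be a countable directed graph, F : E → ℝ a function and β ∈ ℝ. Let ψ ∈ [0,∞)^V be a vector such that Σ_{w∈V} A(β)_{vw} ψ_w ≤ ψ_v for all v ∈ V. Then there exist unique vectors h, k ∈ [0,∞)^V such that h is A(β)-harmonic and ψ_v = h_v + Σ_{w∈V} Σ_{n≥0} A(β)ⁿ_{vw} k_w for all v ∈ V; moreover k is given by k_v = ψ_v − Σ_{w∈V} A(β)_{vw} ψ_w for all v ∈ V. -/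
open scoped ENNReal NNReal Classical
open Filter MeasureTheory

/-- A countable directed graph: countable sets of vertices and edges with
source and range maps. -/
structure DirGraph where
  V : Type
  E : Type
  countV : Countable V
  countE : Countable E
  s : E → V
  r : E → V

namespace DirGraph

attribute [instance] countV countE

variable (G : DirGraph)

/-- `μ` is a finite path (a vertex counts as the empty path). -/
def IsPath (μ : List G.E) : Prop := μ.Chain' (fun e f => G.r e = G.s f)

/-- `μ` is a finite path from `u` to `w`. -/
def IsPathFrom (μ : List G.E) (u w : G.V) : Prop :=
  G.IsPath μ ∧ (∀ e ∈ μ.head?, G.s e = u) ∧ (∀ e ∈ μ.getLast?, G.r e = w) ∧ (μ = [] → u = w)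

/-- A function `F : E → ℝ` extended to finite paths. -/
def Fsum (F : G.E → ℝ) (μ : List G.E) : ℝ := (μ.map F).sum

/-- The matrix `A(β)` over the vertices, with entries in `[0,∞]`:
`A(β)_{uw} = Σ_{e : u → w} e^{-β F(e)}`. -/
noncomputable def Amat (F : G.E → ℝ) (β : ℝ) (u w : G.V) : ℝ≥0∞ :=
  ∑' e : {e : G.E // G.s e = u ∧ G.r e = w}, ENNReal.ofReal (Real.exp (-β * F e.1))

/-- The powers of the matrix `A(β)`, defined recursively; `A(β)⁰` is the identity matrix. -/
noncomputable def Apow (F : G.E → ℝ) (β : ℝ) : ℕ → G.V → G.V → ℝ≥0∞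
  | 0, u, w => if u = w then 1 else 0
  | n + 1, u, w => ∑' x : G.V, G.Amat F β u x * Apow F β n x w

/-- A sink is a vertex emitting no edges. -/
def IsSink (v : G.V) : Prop := ∀ e : G.E, G.s e ≠ v

/-- An infinite emitter is a vertex emitting infinitely many edges. -/
def InfEmitter (v : G.V) : Prop := {e : G.E | G.s e = v}.Infinite

/-- A set of vertices is hereditary when it is closed under following edges. -/
def Hereditary (H : Set G.V) : Prop := ∀ e : G.E, G.s e ∈ H → G.r e ∈ H

/-- A set of vertices `H` is saturated when every vertex of `V ∖ V∞` all of whose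
successors lie in `H` belongs to `H`. -/
def Saturated (H : Set G.V) : Prop :=
  ∀ v : G.V, ¬ G.IsSink v → ¬ G.InfEmitter v → (∀ e : G.E, G.s e = v → G.r e ∈ H) → v ∈ H

/-- `G` is cofinal when the only nonempty hereditary and saturated set of
vertices is the whole vertex set. -/
def Cofinal : Prop :=
  ∀ H : Set G.V, H.Nonempty → G.Hereditary H → G.Saturated H → H = Set.univ

/-- The set of non-wandering vertices: those lying on a loop of length ≥ 1. -/
def NW : Set G.V := {v | ∃ μ : List G.E, μ ≠ [] ∧ G.IsPathFrom μ v v}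

/-- `G` is strongly connected when there is a finite path between any two vertices. -/
def StronglyConnected : Prop := ∀ u w : G.V, ∃ μ : List G.E, G.IsPathFrom μ u w

/-- `G` is row-finite when every vertex emits only finitely many edges. -/
def RowFinite : Prop := ∀ v : G.V, {e : G.E | G.s e = v}.Finite

/-- `ψ` is an `A(β)`-harmonic vector. -/
def Harmonic (F : G.E → ℝ) (β : ℝ) (ψ : G.V → ℝ≥0) : Prop :=
  ∀ v : G.V, ∑' w : G.V, G.Amat F β v w * ψ w = (ψ v : ℝ≥0∞)

/-- `A(β)` is transient when `Σ_n A(β)ⁿ_{vv} < ∞` for every vertex. -/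
def Transient (F : G.E → ℝ) (β : ℝ) : Prop :=
  ∀ v : G.V, ∑' n : ℕ, G.Apow F β n v v ≠ ⊤

/-- `A(β)` is recurrent when `Σ_n A(β)ⁿ_{vv} = ∞` for some vertex. -/
def Recurrent (F : G.E → ℝ) (β : ℝ) : Prop :=
  ∃ v : G.V, ∑' n : ℕ, G.Apow F β n v v = ⊤

/-- An exit path: a sequence of vertices joined by edges which leaves every
finite set of vertices. -/
def IsExitPath (t : ℕ → G.V) : Prop :=
  (∀ i : ℕ, ∃ e : G.E, G.s e = t i ∧ G.r e = t (i + 1)) ∧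
  ∀ M : Set G.V, M.Finite → ∃ N : ℕ, ∀ i : ℕ, N ≤ i → t i ∉ M

/-- Tail equivalence of vertex sequences. -/
def TailEquiv (t t' : ℕ → G.V) : Prop :=
  ∃ k : ℤ, ∃ N : ℕ, ∀ i : ℕ, N ≤ i → 0 ≤ (i : ℤ) + k ∧ t ((i : ℤ) + k).toNat = t' i

/-- A simple loop based at `v`: a loop which returns to `v` only at the very end. -/
def IsSimpleLoop (v : G.V) (μ : List G.E) : Prop :=
  μ ≠ [] ∧ G.IsPathFrom μ v v ∧
  ∀ (i : ℕ) (h : i + 1 < μ.length), G.r (μ.get ⟨i, Nat.lt_of_succ_lt h⟩) ≠ v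

/-- `lⁿ_{vv}(β)`: the weighted number of simple loops of length `n` based at `v`. -/
noncomputable def loopSum (F : G.E → ℝ) (β : ℝ) (v : G.V) (n : ℕ) : ℝ≥0∞ :=
  ∑' μ : {μ : List G.E // μ.length = n ∧ G.IsSimpleLoop v μ},
    ENNReal.ofReal (Real.exp (-β * G.Fsum F μ.1))

/-- The space `P(G)` of infinite paths in `G`. -/
def PathSpace : Type := {p : ℕ → G.E // ∀ i : ℕ, G.r (p i) = G.s (p (i + 1))}

/-- The Borel σ-algebra of `P(G)` as a subspace of the product `E^ℕ` with `E`
discrete (for a countable discrete space, the Borel σ-algebra is the power set). -/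
instance : MeasurableSpace G.PathSpace :=
  letI : MeasurableSpace G.E := ⊤
  inferInstanceAs (MeasurableSpace {p : ℕ → G.E // ∀ i : ℕ, G.r (p i) = G.s (p (i + 1))})

/-- The cylinder set `Z'(v)` of infinite paths starting at the vertex `v`. -/
def cylV (v : G.V) : Set G.PathSpace := {p | G.s (p.1 0) = v}

/-- The cylinder set `Z'(μ)` of infinite paths beginning with the finite path `μ`. -/
def cylP (μ : List G.E) : Set G.PathSpace :=
  {p | ∀ (i : ℕ) (h : i < μ.length), p.1 i = μ.get ⟨i, h⟩}

/-- The set `P(G)_wan` of wandering infinite paths: those visiting each vertex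
only finitely many times. -/
def wanSet : Set G.PathSpace := {p | ∀ v : G.V, {i : ℕ | G.s (p.1 i) = v}.Finite}

end DirGraph

namespace RieszAux

variable {V : Type}

/-- The action of a matrix with entries in `[0,∞]` on a vector. -/
noncomputable def T (A : V → V → ℝ≥0∞) (u : V → ℝ≥0∞) (v : V) : ℝ≥0∞ := ∑' w, A v w * u w

lemma T_add (A : V → V → ℝ≥0∞) (u u' : V → ℝ≥0∞) (v : V) :
    T A (fun w => u w + u' w) v = T A u v + T A u' v := by
  simp only [T, mul_add, ENNReal.tsum_add]

lemma T_mono (A : V → V → ℝ≥0∞) {u u' : V → ℝ≥0∞} (h : ∀ w, u w ≤ u' w) (v : V) :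
    T A u v ≤ T A u' v :=
  ENNReal.tsum_le_tsum fun w => mul_le_mul_right (h w) _

end RieszAux

namespace RieszAux

/-- The `n`-th term of the potential. -/
noncomputable def P (G : DirGraph) (F : G.E → ℝ) (β : ℝ) (k : G.V → ℝ≥0∞) (n : ℕ) (v : G.V) :
    ℝ≥0∞ := ∑' w, G.Apow F β n v w * k w

/-- The potential of `k`. -/
noncomputable def Pot (G : DirGraph) (F : G.E → ℝ) (β : ℝ) (k : G.V → ℝ≥0∞) (v : G.V) :
    ℝ≥0∞ := ∑' w, ∑' n, G.Apow F β n v w * k w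

variable (G : DirGraph) (F : G.E → ℝ) (β : ℝ) (k : G.V → ℝ≥0∞)

lemma P_zero (v : G.V) : P G F β k 0 v = k v := by
  unfold P
  rw [tsum_eq_single v]
  · simp [DirGraph.Apow]
  · intro w hw
    simp [DirGraph.Apow, hw.symm]

lemma P_succ (n : ℕ) (v : G.V) :
    P G F β k (n + 1) v = T (G.Amat F β) (P G F β k n) v := by
  simp only [P, T, DirGraph.Apow, ← ENNReal.tsum_mul_right, ← ENNReal.tsum_mul_left]
  rw [ENNReal.tsum_comm]
  simp only [mul_assoc]

lemma Pot_eq (v : G.V) : Pot G F β k v = ∑' n, P G F β k n v := by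
  unfold Pot P
  rw [ENNReal.tsum_comm]

lemma Pot_step (v : G.V) :
    Pot G F β k v = k v + T (G.Amat F β) (Pot G F β k) v := by
  rw [Pot_eq, tsum_eq_zero_add' ENNReal.summable, P_zero]
  congr 1
  simp only [P_succ, T, Pot_eq, ← ENNReal.tsum_mul_left]
  rw [ENNReal.tsum_comm]

lemma partial_step (n : ℕ) (v : G.V) :
    ∑ i ∈ Finset.range (n + 1), P G F β k i v
      = k v + T (G.Amat F β) (fun w => ∑ i ∈ Finset.range n, P G F β k i w) v := by
  rw [Finset.sum_range_succ', P_zero, add_comm]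
  congr 1
  simp only [P_succ, T, Finset.mul_sum]
  rw [Summable.tsum_finsetSum fun _ _ => ENNReal.summable]

lemma Pot_le (ψ : G.V → ℝ≥0∞) (h : ∀ v, k v + T (G.Amat F β) ψ v ≤ ψ v) (v : G.V) :
    Pot G F β k v ≤ ψ v := by
  rw [Pot_eq]
  have key : ∀ n v, ∑ i ∈ Finset.range n, P G F β k i v ≤ ψ v := by
    intro n
    induction n with
    | zero => intro v; simp
    | succ n ih =>
      intro v
      rw [partial_step]
      exact (add_le_add le_rfl (T_mono _ ih v)).trans (h v)
  rw [ENNReal.tsum_eq_iSup_nat]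
  exact iSup_le fun n => key n v

/-- The potential part is determined. -/
lemma k_eq (ψ : G.V → ℝ≥0∞) (hψ : ∀ v, T (G.Amat F β) ψ v ≤ ψ v) (hf : ∀ v, ψ v ≠ ⊤)
    (h : G.V → ℝ≥0∞) (hh : ∀ v, T (G.Amat F β) h v = h v)
    (hd : ∀ v, ψ v = h v + Pot G F β k v) (v : G.V) :
    k v = ψ v - T (G.Amat F β) ψ v := by
  have h1 : T (G.Amat F β) ψ v = h v + T (G.Amat F β) (Pot G F β k) v := by
    rw [funext hd, T_add, hh]
  have h2 : ψ v = k v + T (G.Amat F β) ψ v := by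
    rw [h1, hd v, Pot_step]; ring
  exact ENNReal.eq_sub_of_add_eq (ne_top_of_le_ne_top (hf v) (hψ v)) h2.symm

end RieszAux

/-- the Riesz decomposition of a superharmonic vector. -/
theorem stmt_0 (G : DirGraph) (F : G.E → ℝ) (β : ℝ) (ψ : G.V → ℝ≥0)
    (hψ : ∀ v : G.V, ∑' w : G.V, G.Amat F β v w * ψ w ≤ (ψ v : ℝ≥0∞)) :
    (∃! p : (G.V → ℝ≥0) × (G.V → ℝ≥0),
        G.Harmonic F β p.1 ∧
        ∀ v : G.V, (ψ v : ℝ≥0∞) =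
          (p.1 v : ℝ≥0∞) + ∑' w : G.V, ∑' n : ℕ, G.Apow F β n v w * p.2 w) ∧
    ∀ p : (G.V → ℝ≥0) × (G.V → ℝ≥0),
      (G.Harmonic F β p.1 ∧
        ∀ v : G.V, (ψ v : ℝ≥0∞) =
          (p.1 v : ℝ≥0∞) + ∑' w : G.V, ∑' n : ℕ, G.Apow F β n v w * p.2 w) →
      ∀ v : G.V, (p.2 v : ℝ≥0∞) = (ψ v : ℝ≥0∞) - ∑' w : G.V, G.Amat F β v w * ψ w := by
  have hψ' : ∀ v, RieszAux.T (G.Amat F β) (fun w => (ψ w : ℝ≥0∞)) v ≤ (ψ v : ℝ≥0∞) := hψ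
  have hk : ∀ p : (G.V → ℝ≥0) × (G.V → ℝ≥0),
      (G.Harmonic F β p.1 ∧
        ∀ v : G.V, (ψ v : ℝ≥0∞) =
          (p.1 v : ℝ≥0∞) + ∑' w : G.V, ∑' n : ℕ, G.Apow F β n v w * p.2 w) →
      ∀ v : G.V, (p.2 v : ℝ≥0∞) = (ψ v : ℝ≥0∞) - ∑' w : G.V, G.Amat F β v w * ψ w := by
    rintro ⟨h, k⟩ ⟨hh, hd⟩ v
    exact RieszAux.k_eq G F β (fun w => (k w : ℝ≥0∞)) (fun w => (ψ w : ℝ≥0∞)) hψ'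
      (fun v => ENNReal.coe_ne_top) (fun w => (h w : ℝ≥0∞)) hh hd v
  refine ⟨?_, hk⟩
  refine existsUnique_of_exists_of_unique ?_ ?_
  · let k : G.V → ℝ≥0∞ := fun v => ψ v - RieszAux.T (G.Amat F β) (fun w => (ψ w : ℝ≥0∞)) v
    have hkt : ∀ v, k v ≠ ⊤ := fun v => ne_top_of_le_ne_top ENNReal.coe_ne_top tsub_le_self
    have hkψ : ∀ v, k v + RieszAux.T (G.Amat F β) (fun w => (ψ w : ℝ≥0∞)) v = ψ v :=
      fun v => tsub_add_cancel_of_le (hψ' v)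
    have hle := RieszAux.Pot_le G F β k (fun w => (ψ w : ℝ≥0∞)) fun v => (hkψ v).le
    have hpt : ∀ v, RieszAux.Pot G F β k v ≠ ⊤ :=
      fun v => ne_top_of_le_ne_top ENNReal.coe_ne_top (hle v)
    let h : G.V → ℝ≥0∞ := fun v => ψ v - RieszAux.Pot G F β k v
    have hht : ∀ v, h v ≠ ⊤ := fun v => ne_top_of_le_ne_top ENNReal.coe_ne_top tsub_le_self
    have hd : ∀ v, (ψ v : ℝ≥0∞) = h v + RieszAux.Pot G F β k v :=
      fun v => (tsub_add_cancel_of_le (hle v)).symm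
    have hharm : ∀ v, RieszAux.T (G.Amat F β) h v = h v := by
      intro v
      have h1 := RieszAux.T_add (G.Amat F β) h (RieszAux.Pot G F β k) v
      rw [← funext hd] at h1
      have h2 := hkψ v
      rw [h1, hd v] at h2
      have h3 : RieszAux.T (G.Amat F β) h v + RieszAux.Pot G F β k v
          = h v + RieszAux.Pot G F β k v := by
        rw [← h2]
        conv_lhs => rw [RieszAux.Pot_step]
        ring
      exact (ENNReal.add_left_inj (hpt v)).1 h3
    have eh : ∀ v, (((h v).toNNReal : ℝ≥0) : ℝ≥0∞) = h v := fun v => ENNReal.coe_toNNReal (hht v)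
    have ek : ∀ v, (((k v).toNNReal : ℝ≥0) : ℝ≥0∞) = k v := fun v => ENNReal.coe_toNNReal (hkt v)
    refine ⟨(fun v => (h v).toNNReal, fun v => (k v).toNNReal), ?_, ?_⟩
    · intro v
      simp only [eh]
      exact hharm v
    · intro v
      simp only [eh, ek]
      exact hd v
  · rintro p q hp hq
    have e2 : p.2 = q.2 := by
      funext v
      have := (hk p hp v).trans (hk q hq v).symm
      exact_mod_cast this
    have e1 : p.1 = q.1 := by
      funext v
      have h1 := hp.2 v
      have h2 := hq.2 v
      rw [e2] at h1
      have hfin : ∑' w : G.V, ∑' n : ℕ, G.Apow F β n v w * q.2 w ≠ ⊤ :=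
        ne_top_of_le_ne_top (ENNReal.coe_ne_top (r := ψ v)) (h2 ▸ le_add_self)
      have := (ENNReal.add_left_inj hfin).1 (h1.symm.trans h2)
      exact_mod_cast this
    exact Prod.ext e1 e2
end

section
/- Let h > 0 be a real number and let (I_j)_{j∈J} be a family of intervals contained in ]h,∞[, indexed by a nonempty finite or countably infinite set J, such that I_{j₀} = ]h,∞[ for at least one j₀ ∈ J. Then there exists a countable strongly connected row-finite directed graph G with infinitely many vertices, with adjacency matrix A, such that: (i) limsup_n (1/n) log Aⁿ_{vv} = h for every vertex v (so the Gurevich entropy of G equals h); (ii) Σ_{n≥0} Aⁿ_{vv} e^{−nh} = ∞ for every vertex v (G is recurrent); (iii) there is a bijection j ↦ τ(j) from J onto the set of exits of G such that for every β ∈ ℝ, every j ∈ J and every exit path t = (tᵢ) representing τ(j), one has [Σ_{n≥0} Aⁿ_{t₁t₁} e^{−nβ} < ∞ and sup_{k≥2} e^{(k−1)β} t(k)^{−1} Σ_{n≥0} Aⁿ_{t₁t_k} e^{−nβ} < ∞, where t(k) = A_{t₁t₂}A_{t₂t₃}⋯A_{t_{k−1}t_k}] if and only if β ∈ I_j. 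-/
open scoped ENNReal NNReal Classical
open Filter MeasureTheory

/-! ## General facts about matrix powers -/

section general
variable {V : Type}

/-- matrix powers -/
noncomputable def mpow (B : V → V → ℝ≥0∞) : ℕ → V → V → ℝ≥0∞
  | 0, u, w => if u = w then 1 else 0
  | n + 1, u, w => ∑' x : V, B u x * mpow B n x w

variable (B : V → V → ℝ≥0∞)

lemma mpow_add (m n : ℕ) (u w : V) :
    mpow B (m + n) u w = ∑' x, mpow B m u x * mpow B n x w := by
  induction m generalizing u with
  | zero =>
    rw [tsum_eq_single u]
    · simp [mpow]
    · intro b hb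
      simp [mpow, hb.symm]
  | succ m ih =>
    rw [show m + 1 + n = (m + n) + 1 by ring]
    simp only [mpow, ih]
    simp_rw [← ENNReal.tsum_mul_left, ← ENNReal.tsum_mul_right]
    rw [ENNReal.tsum_comm]
    simp_rw [mul_assoc]

lemma mpow_one (u w : V) : mpow B 1 u w = B u w := by
  simp only [mpow]
  rw [tsum_eq_single w]
  · simp
  · intro b hb
    simp [hb]

lemma mpow_succ' (n : ℕ) (u w : V) :
    mpow B (n + 1) u w = ∑' x, mpow B n u x * B x w := by
  rw [mpow_add]
  simp_rw [mpow_one]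

/-- The Green function. -/
noncomputable def green (u w : V) : ℝ≥0∞ := ∑' n : ℕ, mpow B n u w

lemma green_eq (u w : V) :
    green B u w = (if u = w then 1 else 0) + ∑' x, green B u x * B x w := by
  unfold green
  rw [tsum_eq_zero_add' ENNReal.summable]
  congr 1
  simp_rw [← ENNReal.tsum_mul_right]
  rw [ENNReal.tsum_comm]
  simp_rw [mpow_succ']

lemma mpow_mul_le (m n : ℕ) (u x w : V) :
    mpow B m u x * mpow B n x w ≤ mpow B (m + n) u w := by
  rw [mpow_add]
  exact ENNReal.le_tsum (f := fun x => mpow B m u x * mpow B n x w) x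

lemma mpow_mul_green_le (m : ℕ) (u x w : V) :
    mpow B m u x * green B x w ≤ green B u w := by
  unfold green
  rw [← ENNReal.tsum_mul_left]
  calc _ ≤ ∑' n, mpow B (m + n) u w :=
        ENNReal.tsum_le_tsum fun n => mpow_mul_le B m n u x w
    _ ≤ _ := ENNReal.tsum_comp_le_tsum_of_injective (add_right_injective m)
        (fun n => mpow B n u w)

lemma green_mul_mpow_le (m : ℕ) (u x w : V) :
    green B u x * mpow B m x w ≤ green B u w := by
  unfold green
  rw [← ENNReal.tsum_mul_right]
  calc _ ≤ ∑' n, mpow B (n + m) u w :=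
        ENNReal.tsum_le_tsum fun n => mpow_mul_le B n m u x w
    _ ≤ _ := ENNReal.tsum_comp_le_tsum_of_injective (add_left_injective m)
        (fun n => mpow B n u w)

/-- left superharmonic vectors bound the green function -/
lemma green_le_of_excessive (φ : V → ℝ≥0∞) (o : V) (ε : ℝ≥0∞)
    (hφ : ∀ w, (if o = w then ε else 0) + ∑' x, φ x * B x w ≤ φ w) (w : V) :
    ε * green B o w ≤ φ w := by
  have key : ∀ M : ℕ, ∀ w, ∑ n ∈ Finset.range M, ε * mpow B n o w ≤ φ w := by
    intro M
    induction M with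
    | zero => intro w; simp
    | succ M ih =>
      intro w
      rw [Finset.sum_range_succ']
      refine le_trans ?_ (hφ w)
      rw [add_comm]
      gcongr
      · simp [mpow]
      · calc _ = ∑' x, (∑ n ∈ Finset.range M, ε * mpow B n o x) * B x w := by
              simp_rw [mpow_succ', ← ENNReal.tsum_mul_left, Finset.sum_mul]
              rw [← Summable.tsum_finsetSum (fun _ _ => ENNReal.summable)]
              simp_rw [mul_assoc]
          _ ≤ _ := ENNReal.tsum_le_tsum fun x => by gcongr; exact ih x
  unfold green
  rw [← ENNReal.tsum_mul_left, ENNReal.tsum_eq_iSup_nat]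
  exact iSup_le fun M => key M w

end general


/-- Graph attached to a matrix of natural numbers. -/
def ofMat (V : Type) [Countable V] (A : V → V → ℕ) : DirGraph where
  V := V
  E := Σ p : V × V, Fin (A p.1 p.2)
  countV := inferInstance
  countE := inferInstance
  s := fun e => e.1.1
  r := fun e => e.1.2

section scaled
variable {V : Type} (A : V → V → ℕ)

/-- scaled matrix -/
noncomputable def scl (q : ℝ≥0∞) (u w : V) : ℝ≥0∞ := (A u w : ℝ≥0∞) * q

lemma mpow_ne_zero_of_reach (q : ℝ≥0∞) (hq : q ≠ 0) (u w : V)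
    (h : Relation.ReflTransGen (fun u w => A u w ≠ 0) u w) :
    ∃ n, mpow (scl A q) n u w ≠ 0 := by
  induction h using Relation.ReflTransGen.head_induction_on with
  | refl => exact ⟨0, by simp [mpow]⟩
  | @head x y h1 _ ih =>
    obtain ⟨n, hn⟩ := ih
    refine ⟨1 + n, fun h => ?_⟩
    have := mpow_mul_le (scl A q) 1 n x y w
    rw [h, mpow_one] at this
    simp only [scl, nonpos_iff_eq_zero, mul_eq_zero] at this
    rcases this with (h | h) | h
    · exact h1 (by exact_mod_cast h)
    · exact hq h
    · exact hn h

lemma mpow_scale (q : ℝ≥0∞) (n : ℕ) (u w : V) :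
    mpow (scl A q) n u w = q ^ n * mpow (scl A 1) n u w := by
  induction n generalizing u with
  | zero => simp [mpow]
  | succ n ih =>
    simp only [mpow, ih]
    rw [← ENNReal.tsum_mul_left]
    congr 1
    ext x
    simp only [scl, mul_one]
    ring

end scaled

section ofMat
variable {V : Type} [Countable V] (A : V → V → ℕ)

lemma edge_fib (u w : V) :
    Nonempty ({e : (ofMat V A).E // (ofMat V A).s e = u ∧ (ofMat V A).r e = w} ≃ Fin (A u w)) := by
  refine ⟨(Equiv.ofBijective (fun i : Fin (A u w) => (⟨⟨(u, w), i⟩, rfl, rfl⟩ :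
    {e : (ofMat V A).E // (ofMat V A).s e = u ∧ (ofMat V A).r e = w})) ⟨?_, ?_⟩).symm⟩
  · intro i i' h
    have := congrArg Subtype.val h
    exact eq_of_heq (Sigma.mk.inj this).2
  · rintro ⟨⟨⟨u', w'⟩, i⟩, h1, h2⟩
    change u' = u at h1
    change w' = w at h2
    subst h1 h2
    exact ⟨i, rfl⟩

lemma Amat_ofMat (c β : ℝ) :
    (ofMat V A).Amat (fun _ => c) β = scl A (ENNReal.ofReal (Real.exp (-β * c))) := by
  funext u w
  unfold DirGraph.Amat scl
  rw [ENNReal.tsum_const]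
  congr 1
  rw [ENat.card_congr (edge_fib A u w).some]
  simp

lemma Apow_eq_mpow (G : DirGraph) (F : G.E → ℝ) (β : ℝ) (n : ℕ) (u w : G.V) :
    G.Apow F β n u w = mpow (G.Amat F β) n u w := by
  induction n generalizing u with
  | zero => rfl
  | succ n ih => simp only [mpow, ← ih]; rfl

lemma Apow_ofMat (c β : ℝ) (n : ℕ) (u w : V) :
    (ofMat V A).Apow (fun _ => c) β n u w
      = mpow (scl A (ENNReal.ofReal (Real.exp (-β * c)))) n u w := by
  rw [← Amat_ofMat]
  exact Apow_eq_mpow _ _ _ _ _ _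

lemma exists_edge (u w : V) :
    (∃ e : (ofMat V A).E, (ofMat V A).s e = u ∧ (ofMat V A).r e = w) ↔ A u w ≠ 0 := by
  constructor
  · rintro ⟨e, he⟩ h
    have := (edge_fib A u w).some ⟨e, he⟩
    rw [h] at this
    exact this.elim0
  · intro h
    exact ⟨⟨(u, w), ⟨0, Nat.pos_of_ne_zero h⟩⟩, rfl, rfl⟩

lemma rowFinite_ofMat (h : ∀ u, {w | A u w ≠ 0}.Finite) : (ofMat V A).RowFinite := by
  intro v
  have hfin : ∀ w : V,
      (Set.range (fun i : Fin (A v w) => (⟨(v, w), i⟩ : (ofMat V A).E))).Finite :=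
    fun w => Set.finite_range _
  refine ((h v).biUnion (fun w _ => hfin w)).subset ?_
  rintro ⟨⟨u', w'⟩, i⟩ h1
  change u' = v at h1
  subst h1
  refine Set.mem_biUnion (x := w') ?_ ⟨i, rfl⟩
  exact fun h0 => Nat.not_lt_zero _ (lt_of_lt_of_eq i.2 h0)

lemma path_of_reach (u w : V) (h : Relation.ReflTransGen (fun u w => A u w ≠ 0) u w) :
    ∃ μ : List (ofMat V A).E, (ofMat V A).IsPathFrom μ u w := by
  induction h using Relation.ReflTransGen.head_induction_on with
  | refl => exact ⟨[], List.IsChain.nil, by simp, by simp, fun _ => rfl⟩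
  | head h1 _ ih =>
    obtain ⟨μ, h2, h3, h4, h5⟩ := ih
    obtain ⟨e, he1, he2⟩ := (exists_edge A _ _).2 h1
    refine ⟨e :: μ, ?_, ?_, ?_, ?_⟩
    · cases μ with
      | nil => exact List.IsChain.singleton _
      | cons f μ =>
        refine List.isChain_cons_cons.2 ⟨?_, h2⟩
        exact he2.trans (h3 f (by simp)).symm
    · intro x hx
      simp only [List.head?_cons, Option.mem_def, Option.some.injEq] at hx
      subst hx; exact he1
    · cases μ with
      | nil =>
        intro x hx
        simp only [List.getLast?_singleton, Option.mem_def, Option.some.injEq] at hx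
        subst hx; exact he2.trans (h5 rfl)
      | cons f μ =>
        intro x hx
        apply h4
        simpa using hx
    · simp

end ofMat

lemma limsup_root (x : ℕ → ℝ≥0∞) (h : ℝ)
    (h1 : ∀ β > h, ∑' n, ENNReal.ofReal (Real.exp (-β)) ^ n * x n ≠ ⊤)
    (h2 : ∑' n, ENNReal.ofReal (Real.exp (-h)) ^ n * x n = ⊤) :
    Filter.limsup (fun n : ℕ => (x n) ^ ((n : ℝ)⁻¹)) Filter.atTop
          = ENNReal.ofReal (Real.exp h) := by
  have hq : ∀ β : ℝ, ENNReal.ofReal (Real.exp (-β)) * ENNReal.ofReal (Real.exp β) = 1 := by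
    intro β
    rw [← ENNReal.ofReal_mul (Real.exp_pos _).le, ← Real.exp_add]; simp
  have hq0 : ∀ β : ℝ, ENNReal.ofReal (Real.exp β) ≠ 0 := by
    intro β; simp [Real.exp_pos]
  apply le_antisymm
  · have key : ∀ β > h, Filter.limsup (fun n : ℕ => (x n) ^ ((n : ℝ)⁻¹)) Filter.atTop
          ≤ ENNReal.ofReal (Real.exp β) := by
      intro β hβ
      have ht := ENNReal.tendsto_atTop_zero_of_tsum_ne_top (h1 β hβ)
      refine Filter.limsup_le_of_le (by isBoundedDefault) ?_
      filter_upwards [ht.eventually_le_const (show (0 : ℝ≥0∞) < 1 by norm_num),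
        Filter.eventually_gt_atTop 0] with n hn hn0
      have hx : x n ≤ ENNReal.ofReal (Real.exp β) ^ n := by
        calc x n = ENNReal.ofReal (Real.exp β) ^ n * (ENNReal.ofReal (Real.exp (-β)) ^ n * x n) := by
              rw [← mul_assoc, ← mul_pow, mul_comm (ENNReal.ofReal (Real.exp β)), hq]; simp
          _ ≤ ENNReal.ofReal (Real.exp β) ^ n * 1 := by gcongr
          _ = _ := mul_one _
      calc x n ^ ((n : ℝ)⁻¹) ≤ (ENNReal.ofReal (Real.exp β) ^ n) ^ ((n : ℝ)⁻¹) := by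
            gcongr
        _ = _ := ENNReal.pow_rpow_inv_natCast hn0.ne' _
    have hc : Filter.Tendsto (fun β : ℝ => ENNReal.ofReal (Real.exp β)) (nhdsWithin h (Set.Ioi h))
        (nhds (ENNReal.ofReal (Real.exp h))) :=
      ((ENNReal.continuous_ofReal.comp Real.continuous_exp).tendsto h).mono_left nhdsWithin_le_nhds
    refine ge_of_tendsto hc ?_
    filter_upwards [self_mem_nhdsWithin] with β hβ using key β hβ
  · by_contra! hlt
    obtain ⟨r, hr1, hr2⟩ := exists_between hlt
    have hev := Filter.eventually_lt_of_limsup_lt hr1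
    obtain ⟨N, hN⟩ := Filter.eventually_atTop.1 (hev.and (Filter.eventually_gt_atTop 0))
    have hfin : ∀ n, x n ≠ ⊤ := by
      intro n hn
      refine h1 (h + 1) (by linarith) ?_
      refine ENNReal.tsum_eq_top_of_eq_top ⟨n, ?_⟩
      rw [hn, ENNReal.mul_top]
      exact pow_ne_zero n (hq0 (-(h + 1)))
    have hle : ∀ n, N ≤ n → x n ≤ r ^ n := by
      intro n hn
      obtain ⟨h3, h4⟩ := hN n hn
      calc x n = (x n ^ ((n : ℝ)⁻¹)) ^ n := by rw [ENNReal.rpow_inv_natCast_pow h4.ne']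
        _ ≤ _ := by gcongr
    have hs : ENNReal.ofReal (Real.exp (-h)) * r < 1 := by
      calc _ < ENNReal.ofReal (Real.exp (-h)) * ENNReal.ofReal (Real.exp h) := by
            rw [ENNReal.mul_lt_mul_iff_right (hq0 _) ENNReal.ofReal_ne_top]; exact hr2
        _ = 1 := hq h
    have hsplit := Summable.sum_add_tsum_nat_add' (k := N)
      (f := fun n => ENNReal.ofReal (Real.exp (-h)) ^ n * x n) ENNReal.summable
    rw [← hsplit] at h2
    refine absurd h2 (ENNReal.add_ne_top.2 ⟨?_, ?_⟩)
    · refine (ENNReal.sum_lt_top.2 fun n _ => ?_).ne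
      exact ENNReal.mul_lt_top (ENNReal.pow_lt_top ENNReal.ofReal_lt_top) (hfin n).lt_top
    · have : ∑' n, ENNReal.ofReal (Real.exp (-h)) ^ (n + N) * x (n + N)
          ≤ ∑' n, (ENNReal.ofReal (Real.exp (-h)) * r) ^ n := by
        refine ENNReal.tsum_le_tsum fun n => ?_
        calc _ ≤ ENNReal.ofReal (Real.exp (-h)) ^ (n + N) * r ^ (n + N) := by
              gcongr; exact hle _ (by omega)
          _ = (ENNReal.ofReal (Real.exp (-h)) * r) ^ (n + N) := by rw [mul_pow]
          _ ≤ _ := pow_le_pow_right_of_le_one' hs.le (by omega)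
      refine ne_top_of_le_ne_top ?_ this
      rw [ENNReal.tsum_geometric]
      simpa [tsub_eq_zero_iff_le] using hs

/-! ## Analytic lemmas -/

/-- greedy expansion -/
lemma exists_expansion (q y : ℝ) (hq0 : 0 < q) (hq1 : q < 1) (hy : 0 ≤ y) :
    ∃ l : ℕ → ℕ, HasSum (fun n => (l n : ℝ) * q ^ (n + 1)) y := by
  let step : ℕ → ℝ → ℝ := fun n r => r - (⌊r / q ^ (n + 1)⌋₊ : ℝ) * q ^ (n + 1)
  let r : ℕ → ℝ := fun n => Nat.rec y (fun n r => step n r) n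
  have hr0 : r 0 = y := rfl
  have hrs : ∀ n, r (n + 1) = r n - (⌊r n / q ^ (n + 1)⌋₊ : ℝ) * q ^ (n + 1) := fun n => rfl
  have hpos : ∀ n, 0 ≤ r n := by
    intro n
    induction n with
    | zero => exact hy
    | succ n ih =>
      rw [hrs]
      have := Nat.floor_le (show 0 ≤ r n / q ^ (n + 1) by positivity)
      rw [le_div_iff₀ (by positivity)] at this
      linarith
  have hlt : ∀ n, r (n + 1) ≤ q ^ (n + 1) := by
    intro n
    rw [hrs]
    have := (Nat.lt_floor_add_one (r n / q ^ (n + 1))).le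
    rw [div_le_iff₀ (by positivity)] at this
    linarith
  refine ⟨fun n => ⌊r n / q ^ (n + 1)⌋₊, ?_⟩
  rw [hasSum_iff_tendsto_nat_of_nonneg (fun n => by positivity)]
  have hsum : ∀ n, ∑ i ∈ Finset.range n, (⌊r i / q ^ (i + 1)⌋₊ : ℝ) * q ^ (i + 1) = y - r n := by
    intro n
    induction n with
    | zero => simp [hr0]
    | succ n ih => rw [Finset.sum_range_succ, ih, hrs]; ring
  simp_rw [hsum]
  have : Tendsto r atTop (nhds 0) := by
    rw [← tendsto_add_atTop_iff_nat 1]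
    refine squeeze_zero (fun n => hpos (n + 1)) hlt ?_
    exact (tendsto_add_atTop_iff_nat 1).2 (tendsto_pow_atTop_nhds_zero_of_lt_one hq0.le hq1)
  simpa using this.const_sub y

lemma lower_realize (D : Set ℝ) (hD : IsLowerSet D) :
    ∃ d : ℕ → ℝ, (∀ i, 0 ≤ d i) ∧ d 0 = 1 ∧
      ∀ β : ℝ, Summable (fun i => d i * Real.exp (i * β)) ↔ β ∈ D := by
  have hexp : ∀ (β α : ℝ) (i : ℕ), Real.exp (-(i * α)) * Real.exp (i * β) = Real.exp (β - α) ^ i := by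
    intro β α i
    rw [← Real.exp_add, ← Real.exp_nat_mul]; congr 1; ring
  by_cases hne : D.Nonempty
  swap
  · rw [Set.not_nonempty_iff_eq_empty] at hne
    subst hne
    refine ⟨fun i => Real.exp ((i : ℝ) ^ 2), fun i => (Real.exp_pos _).le, by simp, fun β => ?_⟩
    simp only [Set.mem_empty_iff_false, iff_false]
    intro hs
    have := hs.tendsto_atTop_zero
    have h2 := this.eventually_lt_const (show (0 : ℝ) < 1 by norm_num)
    obtain ⟨N, hN⟩ := eventually_atTop.1 h2
    obtain ⟨M, hM⟩ := exists_nat_ge (-β)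
    have h3 := hN (max N M) (le_max_left _ _)
    rw [← Real.exp_add, Real.exp_lt_one_iff] at h3
    have h4 : (M : ℝ) ≤ (max N M : ℕ) := by exact_mod_cast le_max_right _ _
    have h5 : (0 : ℝ) ≤ (max N M : ℕ) := by positivity
    nlinarith
  by_cases hb : BddAbove D
  swap
  · refine ⟨fun i => if i = 0 then 1 else 0, fun i => by dsimp; split_ifs <;> norm_num, by simp,
      fun β => ?_⟩
    have : β ∈ D := by
      rw [not_bddAbove_iff] at hb
      obtain ⟨y, hy, hy2⟩ := hb β
      exact hD hy2.le hy
    simp only [this, iff_true]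
    refine summable_of_ne_finset_zero (s := {0}) ?_
    intro i hi
    simp at hi
    simp [hi]
  set α := sSup D
  have hlt : ∀ β < α, β ∈ D := by
    intro β hβ
    obtain ⟨y, hy, hy2⟩ := exists_lt_of_lt_csSup hne hβ
    exact hD hy2.le hy
  have hle : ∀ β ∈ D, β ≤ α := fun β hβ => le_csSup hb hβ
  by_cases hα : α ∈ D
  · refine ⟨fun i => Real.exp (-(i * α)) / ((i : ℝ) + 1) ^ 2, fun i => by positivity, by simp, 
      fun β => ?_⟩
    have hterm : ∀ i : ℕ, Real.exp (-(i * α)) / ((i : ℝ) + 1) ^ 2 * Real.exp (i * β)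
        = Real.exp (β - α) ^ i / ((i : ℝ) + 1) ^ 2 := by
      intro i; rw [← hexp]; ring
    simp_rw [hterm]
    constructor
    · intro hs
      by_contra hβ
      have hβ' : α < β := by
        rcases lt_trichotomy β α with h | h | h
        · exact absurd (hlt β h) hβ
        · exact absurd (h ▸ hα) hβ
        · exact h
      have hgt : 1 < Real.exp (β - α) := by rw [Real.one_lt_exp_iff]; linarith
      have h1 := hs.tendsto_atTop_zero
      have h2 := tendsto_pow_const_div_const_pow_of_one_lt 2 hgt
      have h2' := h2.comp (tendsto_add_atTop_nat 1)
      have h3 := (h1.mul h2').const_mul (Real.exp (β - α))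
      have h4 : ∀ i : ℕ, Real.exp (β - α) * (Real.exp (β - α) ^ i / ((i : ℝ) + 1) ^ 2 *
          ((fun n : ℕ => (n : ℝ) ^ 2 / Real.exp (β - α) ^ n) ∘ fun a => a + 1) i) = 1 := by
        intro i
        simp only [Function.comp]
        push_cast
        rw [pow_succ]
        field_simp
        ring
      simp_rw [h4] at h3
      have := tendsto_nhds_unique h3 tendsto_const_nhds
      norm_num at this
    · intro hβ
      have hs : Summable (fun i : ℕ => 1 / ((i : ℝ) + 1) ^ 2) := by
        have := (summable_nat_add_iff (f := fun n : ℕ => 1 / (n : ℝ) ^ 2) 1).2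
          (Real.summable_one_div_nat_pow.2 (by norm_num))
        simpa using this
      refine hs.of_nonneg_of_le (fun i => by positivity) (fun i => ?_)
      gcongr
      refine pow_le_one₀ (by positivity) ?_
      rw [Real.exp_le_one_iff]
      linarith [hle β hβ]
  · refine ⟨fun i => Real.exp (-(i * α)), fun i => by positivity, by simp, fun β => ?_⟩
    simp_rw [hexp]
    rw [summable_geometric_iff_norm_lt_one, Real.norm_eq_abs, abs_of_pos (Real.exp_pos _),
      Real.exp_lt_one_iff]
    constructor
    · intro h; exact hlt β (by linarith)
    · intro h
      have := hle β h
      rcases this.lt_or_eq with h1 | h1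
      · linarith
      · exact absurd (h1 ▸ h) hα

/-- the source levels -/
def srcm (r : ℕ) : ℕ := if r % 2 = 0 then r / 2 else 3 * (r / 2) + 1

lemma srcm_ge (r : ℕ) : r / 2 ≤ srcm r := by unfold srcm; split_ifs <;> omega

lemma interval_realize (I : Set ℝ) (hI : I.OrdConnected) :
    ∃ c : ℕ → ℝ, (∀ i, 0 ≤ c i) ∧ c 0 = 1 ∧
      ∀ β : ℝ, Summable (fun r : ℕ => c r * Real.exp (((r : ℝ) - srcm r) * β)) ↔ β ∈ I := by
  obtain ⟨d, hd0, hd1, hd⟩ := lower_realize {β | ∃ x ∈ I, β ≤ x}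
    (fun a b hab ⟨x, hx, h⟩ => ⟨x, hx, hab.trans h⟩)
  obtain ⟨e, he0, he1, he⟩ := lower_realize {β | ∃ x ∈ I, x ≤ -β}
    (fun a b hab ⟨x, hx, h⟩ => ⟨x, hx, h.trans (by linarith)⟩)
  refine ⟨fun r => if r % 2 = 0 then d (r / 2) else e (r / 2), fun i => ?_, by simp [hd1], ?_⟩
  · dsimp; split_ifs
    · exact hd0 _
    · exact he0 _
  intro β
  have hiff : β ∈ I ↔ (∃ x ∈ I, β ≤ x) ∧ (∃ x ∈ I, x ≤ -(-β)) := by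
    constructor
    · intro h; exact ⟨⟨β, h, le_rfl⟩, ⟨β, h, by simp⟩⟩
    · rintro ⟨⟨x, hx, h1⟩, ⟨y, hy, h2⟩⟩
      exact hI.out hy hx ⟨by linarith, h1⟩
  rw [hiff]
  have h1 := hd β
  have h2 := he (-β)
  simp only [Set.mem_ofPred_eq] at h1 h2
  rw [← h1, ← h2]
  set f : ℕ → ℝ := fun r => (if r % 2 = 0 then d (r / 2) else e (r / 2)) *
    Real.exp (((r : ℝ) - srcm r) * β) with hf
  have hE : ∀ i : ℕ, f (2 * i) = d i * Real.exp (i * β) := by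
    intro i
    have : srcm (2 * i) = i := by unfold srcm; split_ifs <;> omega
    simp only [hf, this]
    rw [if_pos (by omega), show 2 * i / 2 = i by omega]
    push_cast
    congr 2; ring
  have hO : ∀ i : ℕ, f (2 * i + 1) = e i * Real.exp (i * -β) := by
    intro i
    have : srcm (2 * i + 1) = 3 * i + 1 := by unfold srcm; split_ifs <;> omega
    simp only [hf, this]
    rw [if_neg (by omega), show (2 * i + 1) / 2 = i by omega]
    push_cast
    congr 2; ring
  constructor
  · intro hs
    refine ⟨?_, ?_⟩
    · simp_rw [← hE]
      exact hs.comp_injective (i := fun i => 2 * i) (fun a b h => by simpa using h)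
    · simp_rw [← hO]
      exact hs.comp_injective (i := fun i => 2 * i + 1) (fun a b h => by simpa using h)
  · rintro ⟨ha, hb⟩
    simp_rw [← hE] at ha
    simp_rw [← hO] at hb
    exact (ha.hasSum.even_add_odd hb.hasSum).summable

lemma integer_realize (I : Set ℝ) (hI : I.OrdConnected) :
    ∃ a N : ℕ → ℕ, (∀ i, a i ≠ 0) ∧ N 0 ≠ 0 ∧
      ∀ β : ℝ, ((∑' r : ℕ, ENNReal.ofReal ((N r : ℝ) / (∏ i ∈ Finset.range r, (a i : ℝ)) *
          Real.exp (((r : ℝ) - srcm r) * β))) ≠ ⊤) ↔ β ∈ I := by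
  obtain ⟨c, hc0, hc1, hc⟩ := interval_realize I hI
  let a : ℕ → ℕ := fun p => ⌈1 / c (p + 1)⌉₊ + 1
  have ha1 : ∀ p, (1 : ℝ) ≤ a p := fun p => by simp [a]
  let P : ℕ → ℝ := fun r => ∏ i ∈ Finset.range r, (a i : ℝ)
  have hP : ∀ r, 1 ≤ P r := fun r => by
    induction r with
    | zero => simp [P]
    | succ r ih =>
      have h1 : P (r + 1) = P r * a r := Finset.prod_range_succ _ _
      rw [h1]
      nlinarith [ha1 r]
  have hPc : ∀ r, c r ≠ 0 → 1 ≤ c r * P r := by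
    intro r hr
    cases r with
    | zero => simp [P, hc1]
    | succ r =>
      have hpos : 0 < c (r + 1) := lt_of_le_of_ne (hc0 _) hr.symm
      have h1 : P (r + 1) = P r * a r := Finset.prod_range_succ _ _
      have h2 : 1 / c (r + 1) ≤ a r := by
        have := Nat.le_ceil (1 / c (r + 1))
        simp only [a]; push_cast; linarith
      rw [div_le_iff₀ hpos] at h2
      rw [h1]
      nlinarith [hP r, ha1 r]
  refine ⟨a, fun r => ⌈c r * P r⌉₊, fun i => by simp [a], by simp [P, hc1], fun β => ?_⟩
  rw [← hc β]
  change ∑' r : ℕ, ENNReal.ofReal ((⌈c r * P r⌉₊ : ℝ) / P r *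
          Real.exp (((r : ℝ) - srcm r) * β)) ≠ ⊤ ↔ _
  have hlow : ∀ r, c r ≤ (⌈c r * P r⌉₊ : ℝ) / P r := by
    intro r
    rw [le_div_iff₀ (by linarith [hP r])]
    exact Nat.le_ceil _
  have hup : ∀ r, (⌈c r * P r⌉₊ : ℝ) / P r ≤ 2 * c r := by
    intro r
    rw [div_le_iff₀ (by linarith [hP r])]
    by_cases h : c r = 0
    · simp [h]
    · have h1 := hPc r h
      have := (Nat.ceil_lt_add_one (show 0 ≤ c r * P r by linarith)).le
      nlinarith
  have hnn : ∀ r, 0 ≤ (⌈c r * P r⌉₊ : ℝ) / P r * Real.exp (((r : ℝ) - srcm r) * β) := by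
    intro r
    have := hP r
    have : 0 ≤ P r := by linarith
    positivity
  constructor
  · intro h
    have hs := ENNReal.summable_toReal h
    refine hs.of_nonneg_of_le (fun r => mul_nonneg (hc0 r) (Real.exp_pos _).le) (fun r => ?_)
    rw [ENNReal.toReal_ofReal (hnn r)]
    have := hlow r
    gcongr
  · intro hs
    have h2 : Summable (fun r => (⌈c r * P r⌉₊ : ℝ) / P r * Real.exp (((r : ℝ) - srcm r) * β)) := by
      refine (hs.mul_left 2).of_nonneg_of_le hnn (fun r => ?_)
      rw [← mul_assoc]
      have := hup r
      gcongr
    exact h2.tsum_ofReal_ne_top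

/-! ## The graph -/

/-- Data for the rays. -/
structure Ray (J : Type) where
  j0 : J
  a : J → ℕ → ℕ
  N : J → ℕ → ℕ
  src : J → ℕ → ℕ
  ha : ∀ j k, a j k ≠ 0
  ha0 : ∀ k, a j0 k = 1
  hN0 : ∀ k, N j0 k = 0
  hN : ∀ j, j ≠ j0 → N j 0 ≠ 0
  hsrc : ∀ m, {p : J × ℕ | src p.1 p.2 = m}.Finite

namespace Ray
variable {J : Type} (R : Ray J) (l : ℕ → ℕ) (ell : J × ℕ → ℕ)

/-- adjacency matrix -/
noncomputable def mat : (J × ℕ) ⊕ ℕ → (J × ℕ) ⊕ ℕ → ℕ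
  | .inl x, .inl y => (if x = (y.1, y.2 - 1) ∧ y.2 ≠ 0 then R.a x.1 x.2 else 0)
      + (if x = (R.j0, R.src y.1 y.2) then R.N y.1 y.2 else 0)
      + (if x.1 = R.j0 ∧ y = (R.j0, 0) then l x.2 else 0)
  | .inl x, .inr n => if ell x = n then 1 else 0
  | .inr n, .inl y => if n = 0 ∧ y = (R.j0, 0) then 1 else 0
  | .inr n, .inr m => if n = m + 1 then 1 else 0

/-- left vector on the rays -/
noncomputable def phi (q : ℝ≥0∞) (j : J) : ℕ → ℝ≥0∞
  | 0 => if j = R.j0 then 1 else (R.N j 0 : ℝ≥0∞) * q ^ (R.src j 0 + 1)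
  | k + 1 => phi q j k * (R.a j k * q) + (R.N j (k + 1) : ℝ≥0∞) * q ^ (R.src j (k + 1) + 1)

/-- weight entering the return ray -/
noncomputable def cc (q : ℝ≥0∞) (n : ℕ) : ℝ≥0∞ :=
  ∑' x : J × ℕ, if ell x = n then R.phi q x.1 x.2 * q else 0

noncomputable def psi (q : ℝ≥0∞) (n : ℕ) : ℝ≥0∞ := ∑' i : ℕ, q ^ i * R.cc ell q (n + i)

noncomputable def Phi (q : ℝ≥0∞) : (J × ℕ) ⊕ ℕ → ℝ≥0∞
  | .inl x => R.phi q x.1 x.2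
  | .inr n => R.psi ell q n

noncomputable def SS (q : ℝ≥0∞) : ℝ≥0∞ :=
  (∑' k, R.phi q R.j0 k * (l k : ℝ≥0∞)) + R.psi ell q 0

/-- the root -/
def root : (J × ℕ) ⊕ ℕ := .inl (R.j0, 0)

lemma colU (q : ℝ≥0∞) (g : (J × ℕ) ⊕ ℕ → ℝ≥0∞) (n : ℕ) :
    ∑' x, g x * scl (R.mat l ell) q x (.inr n)
      = (∑' x : J × ℕ, if ell x = n then g (.inl x) * q else 0) + g (.inr (n + 1)) * q := by
  rw [Summable.tsum_sum ENNReal.summable ENNReal.summable]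
  congr 1
  · congr 1
    ext x
    simp only [scl, mat]
    split_ifs <;> simp
  · rw [tsum_eq_single (n + 1)]
    · simp [scl, mat]
    · intro m hm
      simp [scl, mat, hm]

lemma colI (q : ℝ≥0∞) (g : (J × ℕ) ⊕ ℕ → ℝ≥0∞) (y : J × ℕ) :
    ∑' x, g x * scl (R.mat l ell) q x (.inl y)
      = (if y.2 ≠ 0 then g (.inl (y.1, y.2 - 1)) * (R.a y.1 (y.2 - 1) * q) else 0)
      + g (.inl (R.j0, R.src y.1 y.2)) * (R.N y.1 y.2 * q)
      + (if y = (R.j0, 0) then (∑' k, g (.inl (R.j0, k)) * (l k * q)) + g (.inr 0) * q else 0) := by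
  rw [Summable.tsum_sum ENNReal.summable ENNReal.summable]
  have h1 : ∑' x : J × ℕ, g (.inl x) * scl (R.mat l ell) q (.inl x) (.inl y)
      = (∑' x : J × ℕ, if x = (y.1, y.2 - 1) ∧ y.2 ≠ 0 then g (.inl x) * (R.a x.1 x.2 * q) else 0)
      + (∑' x : J × ℕ, if x = (R.j0, R.src y.1 y.2) then g (.inl x) * (R.N y.1 y.2 * q) else 0)
      + (∑' x : J × ℕ, if x.1 = R.j0 ∧ y = (R.j0, 0) then g (.inl x) * (l x.2 * q) else 0) := by
    rw [← ENNReal.tsum_add, ← ENNReal.tsum_add]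
    congr 1
    ext x
    simp only [scl, mat]
    push_cast
    rw [add_mul, add_mul, mul_add, mul_add]
    congr 1
    · congr 1
      · split_ifs <;> simp
      · split_ifs <;> simp
    · split_ifs <;> simp
  rw [h1]
  have h2 : (∑' x : J × ℕ, if x = (y.1, y.2 - 1) ∧ y.2 ≠ 0 then g (.inl x) * (R.a x.1 x.2 * q) else 0)
      = (if y.2 ≠ 0 then g (.inl (y.1, y.2 - 1)) * (R.a y.1 (y.2 - 1) * q) else 0) := by
    rw [tsum_eq_single (y.1, y.2 - 1)]
    · simp
    · intro b hb
      simp [hb]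
  have h3 : (∑' x : J × ℕ, if x = (R.j0, R.src y.1 y.2) then g (.inl x) * (R.N y.1 y.2 * q) else 0)
      = g (.inl (R.j0, R.src y.1 y.2)) * (R.N y.1 y.2 * q) := by
    rw [tsum_eq_single (R.j0, R.src y.1 y.2)]
    · simp
    · intro b hb
      simp [hb]
  rw [h2, h3, add_assoc]
  congr 1
  by_cases hy : y = (R.j0, 0)
  · simp only [hy, and_true, if_true]
    congr 1
    · rw [ENNReal.tsum_prod', tsum_eq_single R.j0]
      · simp
      · intro b hb
        simp [hb]
    · rw [tsum_eq_single 0]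
      · simp [scl, mat]
      · intro b hb
        simp [scl, mat, hb]
  · simp [hy, scl, mat]

lemma phi_j0 (q : ℝ≥0∞) (k : ℕ) : R.phi q R.j0 k = q ^ k := by
  induction k with
  | zero => simp [phi]
  | succ k ih => simp [phi, ih, R.ha0, R.hN0, pow_succ]

lemma psi_rec (q : ℝ≥0∞) (n : ℕ) : R.psi ell q n = R.cc ell q n + R.psi ell q (n + 1) * q := by
  unfold psi
  rw [tsum_eq_zero_add' ENNReal.summable, ← ENNReal.tsum_mul_right]
  congr 1
  · simp
  · congr 1
    ext i
    rw [show n + (i + 1) = n + 1 + i by ring]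
    ring

lemma Phi_col (q : ℝ≥0∞) (w : (J × ℕ) ⊕ ℕ) :
    ∑' x, R.Phi ell q x * scl (R.mat l ell) q x w
      = if R.root = w then q * R.SS l ell q else R.Phi ell q w := by
  rcases w with ⟨j, k⟩ | n
  · rw [colI]
    cases k with
    | zero =>
      by_cases hj : j = R.j0
      · subst hj
        simp only [root, if_true, R.hN0, Phi, SS]
        simp only [ne_eq, not_true_eq_false, if_false, Nat.cast_zero, zero_mul, mul_zero, add_zero,
          zero_add]
        rw [mul_add, ← ENNReal.tsum_mul_left]
        congr 1
        · congr 1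
          ext k; ring
        · ring
      · have h1 : ((j, 0) : J × ℕ) ≠ (R.j0, 0) := by simpa using hj
        have h2 : R.root ≠ .inl (j, 0) := by
          simp only [root, ne_eq, Sum.inl.injEq]; exact h1.symm
        rw [if_neg h1, if_neg h2]
        simp only [Phi, phi, if_neg hj, phi_j0]
        simp
        ring
    | succ k =>
      have h2 : R.root ≠ .inl (j, k + 1) := by simp [root]
      rw [if_neg h2]
      simp only [Phi, phi, phi_j0]
      simp
      ring
  · rw [colU, if_neg (by simp [root])]
    simp only [Phi]
    rw [psi_rec R ell q n]
    rfl

lemma phi_ne_top (q : ℝ≥0∞) (hq : q ≠ ⊤) (j : J) (k : ℕ) : R.phi q j k ≠ ⊤ := by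
  induction k with
  | zero =>
    simp only [phi]
    split_ifs
    · simp
    · exact ENNReal.mul_ne_top (by simp) (ENNReal.pow_ne_top hq)
  | succ k ih =>
    simp only [phi]
    exact ENNReal.add_ne_top.2 ⟨ENNReal.mul_ne_top ih (ENNReal.mul_ne_top (by simp) hq),
      ENNReal.mul_ne_top (by simp) (ENNReal.pow_ne_top hq)⟩

lemma phi_mono {q p : ℝ≥0∞} (hqp : q ≤ p) (j : J) (k : ℕ) : R.phi q j k ≤ R.phi p j k := by
  induction k with
  | zero =>
    simp only [phi]
    split_ifs
    · exact le_rfl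
    · gcongr
  | succ k ih =>
    simp only [phi]
    gcongr

lemma SS_mono {q p : ℝ≥0∞} (hqp : q ≤ p) : R.SS l ell q ≤ R.SS l ell p := by
  unfold SS psi cc
  refine add_le_add (ENNReal.tsum_le_tsum fun k => ?_) (ENNReal.tsum_le_tsum fun k => ?_)
  · gcongr
    exact R.phi_mono hqp _ _
  · gcongr with x
    split_ifs
    · gcongr
      exact R.phi_mono hqp _ _
    · exact le_rfl

lemma green_root_phi (q : ℝ≥0∞) (j : J) (k : ℕ) :
    green (scl (R.mat l ell) q) R.root (.inl (j, k))
      = R.phi q j k * green (scl (R.mat l ell) q) R.root R.root := by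
  have hmain : ∀ k, green (scl (R.mat l ell) q) R.root (.inl (R.j0, k))
      = q ^ k * green (scl (R.mat l ell) q) R.root R.root := by
    intro k
    induction k with
    | zero => simp [root]
    | succ k ih =>
      rw [green_eq, colI]
      simp [root] at ih ⊢
      rw [ih, R.ha0, R.hN0]
      simp [pow_succ]
      ring
  by_cases hj : j = R.j0
  · subst hj; rw [hmain, phi_j0]
  induction k with
  | zero =>
    rw [green_eq, colI, hmain]
    simp [phi, hj, root, Ne.symm hj]
    ring
  | succ k ih =>
    rw [green_eq, colI, hmain]
    simp [phi, root] at ih ⊢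
    rw [ih]
    ring

lemma green_root_psi (q : ℝ≥0∞) (n : ℕ) :
    R.psi ell q n * green (scl (R.mat l ell) q) R.root R.root
      ≤ green (scl (R.mat l ell) q) R.root (.inr n) := by
  have hrec : ∀ n, green (scl (R.mat l ell) q) R.root (.inr n)
      = R.cc ell q n * green (scl (R.mat l ell) q) R.root R.root
        + green (scl (R.mat l ell) q) R.root (.inr (n + 1)) * q := by
    intro n
    rw [green_eq, colU, if_neg (by simp [root]), zero_add]
    congr 1
    unfold cc
    rw [← ENNReal.tsum_mul_right]
    congr 1
    ext ⟨j, k⟩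
    rw [green_root_phi]
    split_ifs
    · ring
    · simp
  have key : ∀ M n, (∑ i ∈ Finset.range M, q ^ i * R.cc ell q (n + i)) *
      green (scl (R.mat l ell) q) R.root R.root
      ≤ green (scl (R.mat l ell) q) R.root (.inr n) := by
    intro M
    induction M with
    | zero => simp
    | succ M ih =>
      intro n
      rw [Finset.sum_range_succ', hrec n, add_mul, add_comm]
      refine add_le_add (by simp) ?_
      calc _ = (∑ i ∈ Finset.range M, q ^ i * R.cc ell q (n + 1 + i)) *
          green (scl (R.mat l ell) q) R.root R.root * q := by
            rw [Finset.sum_mul, Finset.sum_mul, Finset.sum_mul]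
            refine Finset.sum_congr rfl fun i _ => ?_
            rw [show n + (i + 1) = n + 1 + i by ring]
            ring
        _ ≤ _ := by gcongr; exact ih (n + 1)
  unfold psi
  rw [ENNReal.tsum_eq_iSup_nat, ENNReal.iSup_mul]
  exact iSup_le fun M => key M n

lemma green_root_top (q : ℝ≥0∞) (h : q * R.SS l ell q = 1) :
    green (scl (R.mat l ell) q) R.root R.root = ⊤ := by
  by_contra hne
  set g := green (scl (R.mat l ell) q) R.root R.root with hg
  have h1 : g = 1 + ∑' x, green (scl (R.mat l ell) q) R.root x *
      scl (R.mat l ell) q x (.inl (R.j0, 0)) := by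
    conv_lhs => rw [hg, green_eq, if_pos rfl]
    rfl
  rw [colI] at h1
  have h2 : 1 + g ≤ g := by
    conv_rhs => rw [h1]
    gcongr
    refine le_trans ?_ le_add_self
    rw [if_pos rfl]
    calc g = q * R.SS l ell q * g := by rw [h, one_mul]
      _ = (∑' k, R.phi q R.j0 k * g * (l k * q)) + R.psi ell q 0 * g * q := by
        unfold SS
        rw [mul_add, add_mul, ← ENNReal.tsum_mul_left, ← ENNReal.tsum_mul_right]
        congr 1
        · congr 1
          ext k; ring
        · ring
      _ ≤ _ := by
        simp_rw [green_root_phi]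
        gcongr
        exact R.green_root_psi l ell q 0
  exact absurd h2 (not_le.2 (by rw [add_comm]; exact ENNReal.lt_add_right hne one_ne_zero))

lemma psi_ne_top (q : ℝ≥0∞) (hq : q ≠ 0) (hS : R.SS l ell q ≠ ⊤) (n : ℕ) :
    R.psi ell q n ≠ ⊤ := by
  induction n with
  | zero => exact ne_top_of_le_ne_top hS le_add_self
  | succ n ih =>
    intro h
    rw [psi_rec, h, ENNReal.top_mul hq] at ih
    simp at ih

lemma green_root_ne_top (q : ℝ≥0∞) (hq : q ≠ 0) (hq' : q ≠ ⊤) (h : q * R.SS l ell q < 1)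
    (w : (J × ℕ) ⊕ ℕ) :
    green (scl (R.mat l ell) q) R.root w ≠ ⊤ := by
  have hS : R.SS l ell q ≠ ⊤ := by
    intro hS
    rw [hS, ENNReal.mul_top hq] at h
    simp at h
  have hw : R.Phi ell q w ≠ ⊤ := by
    rcases w with ⟨j, k⟩ | n
    · exact R.phi_ne_top q hq' j k
    · exact R.psi_ne_top l ell q hq hS n
  have h1 := green_le_of_excessive (scl (R.mat l ell) q) (R.Phi ell q) R.root
    (1 - q * R.SS l ell q) (fun w => by
      rw [Phi_col]
      split_ifs with hw
      · rw [← hw, tsub_add_cancel_of_le h.le]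
        simp [Phi, root, phi]
      · simp) w
  intro ht
  rw [ht, ENNReal.mul_top (by simpa [tsub_eq_zero_iff_le] using h)] at h1
  exact hw (top_le_iff.1 h1)

end Ray

namespace Ray
variable {J : Type} (R : Ray J) (l : ℕ → ℕ) (ell : J × ℕ → ℕ)

lemma psi_zero_mul (p : ℝ≥0∞) :
    p * R.psi ell p 0 = ∑' x : J × ℕ, R.phi p x.1 x.2 * p ^ (ell x + 2) := by
  unfold psi cc
  simp_rw [← ENNReal.tsum_mul_left]
  rw [ENNReal.tsum_comm]
  congr 1
  ext x
  rw [tsum_eq_single (ell x)]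
  · simp
    ring
  · intro b hb
    simp [hb.symm]

lemma exists_params [Countable J] (p : ℝ) (hp0 : 0 < p) (hp1 : p < 1) :
    ∃ (l : ℕ → ℕ) (ell : J × ℕ → ℕ), (∀ x, x.2 ≤ ell x) ∧
      ENNReal.ofReal p * R.SS l ell (ENNReal.ofReal p) = 1 := by
  set P := ENNReal.ofReal p with hP
  have hP1 : P < 1 := by rw [hP, ENNReal.ofReal_lt_one]; exact hp1
  have hPt : P ≠ ⊤ := hP1.ne_top
  obtain ⟨ε, hε, hsum⟩ := ENNReal.exists_pos_sum_of_countable' (one_ne_zero : (1 : ℝ≥0∞) ≠ 0) (J × ℕ)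
  have hex : ∀ x : J × ℕ, ∃ n, x.2 ≤ n ∧ R.phi P x.1 x.2 * P ^ (n + 2) ≤ ε x := by
    intro x
    have h1 : Tendsto (fun n : ℕ => P ^ (n + 2)) atTop (nhds 0) :=
      (tendsto_add_atTop_iff_nat 2).2 (ENNReal.tendsto_pow_atTop_nhds_zero_of_lt_one hP1)
    have h2 := ENNReal.Tendsto.const_mul (a := R.phi P x.1 x.2) h1
      (Or.inr (R.phi_ne_top P hPt x.1 x.2))
    rw [mul_zero] at h2
    obtain ⟨n, hn1, hn2⟩ := ((h2.eventually_le_const (hε x)).and (eventually_ge_atTop x.2)).exists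
    exact ⟨n, hn2, hn1⟩
  choose ell hell1 hell2 using hex
  set δ : ℝ≥0∞ := ∑' x : J × ℕ, R.phi P x.1 x.2 * P ^ (ell x + 2) with hδ
  have hδ1 : δ < 1 := (ENNReal.tsum_le_tsum hell2).trans_lt hsum
  have hδr : δ.toReal < 1 := by
    have := (ENNReal.toReal_lt_toReal hδ1.ne_top ENNReal.one_ne_top).2 hδ1
    simpa using this
  obtain ⟨l, hl⟩ := exists_expansion p (1 - δ.toReal) hp0 hp1 (by linarith)
  refine ⟨l, ell, hell1, ?_⟩
  unfold SS
  rw [mul_add, psi_zero_mul, ← hδ, ← ENNReal.tsum_mul_left]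
  have h1 : ∑' k, P * (R.phi P R.j0 k * (l k : ℝ≥0∞)) = ENNReal.ofReal (1 - δ.toReal) := by
    rw [← hl.tsum_eq, ENNReal.ofReal_tsum_of_nonneg (fun n => by positivity) hl.summable]
    congr 1
    ext k
    rw [phi_j0, ENNReal.ofReal_mul (by positivity), ENNReal.ofReal_pow hp0.le, ← hP]
    simp
    ring
  rw [h1, ENNReal.ofReal_sub _ ENNReal.toReal_nonneg, ENNReal.ofReal_toReal hδ1.ne_top]
  simp [tsub_add_cancel_of_le hδ1.le]

lemma mat_step (j : J) (k : ℕ) : R.mat l ell (.inl (j, k)) (.inl (j, k + 1)) = R.a j k := by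
  simp only [mat]
  by_cases h : j = R.j0
  · subst h; simp [R.hN0]
  · simp [h]

/-- reachability -/
abbrev Reach : (J × ℕ) ⊕ ℕ → (J × ℕ) ⊕ ℕ → Prop :=
  Relation.ReflTransGen (fun u w => R.mat l ell u w ≠ 0)

lemma reach_desc (m n : ℕ) : R.Reach l ell (.inr (n + m)) (.inr n) := by
  induction m with
  | zero => exact .refl
  | succ m ih => exact Relation.ReflTransGen.head (by simp [mat]; omega) ih

lemma reach_ray (j : J) (k : ℕ) : R.Reach l ell (.inl (j, 0)) (.inl (j, k)) := by
  induction k with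
  | zero => exact .refl
  | succ k ih => exact ih.tail (by rw [mat_step]; exact R.ha j k)

lemma reach_inl (x : J × ℕ) : R.Reach l ell R.root (.inl x) := by
  obtain ⟨j, k⟩ := x
  by_cases h : j = R.j0
  · subst h; exact R.reach_ray l ell _ k
  · refine Relation.ReflTransGen.trans ?_ (R.reach_ray l ell j k)
    refine (R.reach_ray l ell R.j0 (R.src j 0)).tail ?_
    have := R.hN j h
    simp [mat, this]

lemma reach_from (hell : ∀ x, x.2 ≤ ell x) (w : (J × ℕ) ⊕ ℕ) : R.Reach l ell R.root w := by
  rcases w with x | n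
  · exact R.reach_inl l ell x
  · have h1 := hell (R.j0, n)
    obtain ⟨m, hm⟩ := Nat.exists_eq_add_of_le h1
    refine Relation.ReflTransGen.trans ((R.reach_inl l ell (R.j0, n)).tail (c := .inr (n + m)) ?_)
      (R.reach_desc l ell m n)
    simp [mat, hm]

lemma reach_to (w : (J × ℕ) ⊕ ℕ) : R.Reach l ell w R.root := by
  have h : ∀ n, R.Reach l ell (.inr n) R.root := by
    intro n
    have := R.reach_desc l ell n 0
    rw [zero_add] at this
    exact this.tail (by simp [mat, root])
  rcases w with x | n
  · exact Relation.ReflTransGen.head (by simp [mat]) (h (ell x))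
  · exact h n

lemma row_finite (u : (J × ℕ) ⊕ ℕ) : {w | R.mat l ell u w ≠ 0}.Finite := by
  rcases u with ⟨j, k⟩ | n
  · refine (((((R.hsrc k).image (Sum.inl : J × ℕ → (J × ℕ) ⊕ ℕ)).insert (.inl (j, k + 1))).insert
      (.inl (R.j0, 0))).insert (.inr (ell (j, k)))).subset ?_
    rintro (⟨j', k'⟩ | n) hw
    · change R.mat l ell _ _ ≠ 0 at hw
      simp only [mat] at hw
      by_contra hcon
      simp only [Set.mem_insert_iff, Set.mem_image, not_or, not_exists, not_and] at hcon
      obtain ⟨-, h1, h2, h3⟩ := hcon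
      apply hw
      have h3' : k ≠ R.src j' k' := fun h => h3 (j', k') h.symm rfl
      rw [if_neg, if_neg, if_neg]
      · rintro ⟨-, h⟩
        exact h1 (by rw [h])
      · intro h
        exact h3' (Prod.mk.inj h).2
      · rintro ⟨h, h'⟩
        obtain ⟨h5, h6⟩ := Prod.mk.inj h
        apply h2
        rw [h5, h6, Nat.sub_add_cancel (by omega)]
    · change R.mat l ell _ _ ≠ 0 at hw
      simp only [mat] at hw
      left
      by_contra hcon
      exact hw (if_neg fun h => hcon (by rw [h]))
  · refine (((Set.finite_empty).insert (.inl (R.j0, 0) : (J × ℕ) ⊕ ℕ)).insert (.inr (n - 1))).subset ?_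
    rintro (y | m) hw
    · change R.mat l ell _ _ ≠ 0 at hw
      simp only [mat, ne_eq, ite_eq_right_iff, one_ne_zero, imp_false, not_not] at hw
      right; left; rw [hw.2]
    · change R.mat l ell _ _ ≠ 0 at hw
      simp only [mat, ne_eq, ite_eq_right_iff, one_ne_zero, imp_false, not_not] at hw
      left; rw [hw]; rfl

lemma exit_class (t : ℕ → (J × ℕ) ⊕ ℕ) (h1 : ∀ i, R.mat l ell (t i) (t (i + 1)) ≠ 0)
    (h2 : ∀ M : Set ((J × ℕ) ⊕ ℕ), M.Finite → ∃ N : ℕ, ∀ i : ℕ, N ≤ i → t i ∉ M) :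
    ∃ (j : J) (N c : ℕ), ∀ i, t (N + i) = .inl (j, c + i) := by
  obtain ⟨N0, hN0⟩ := h2 {R.root} (Set.finite_singleton _)
  have hroot : ∀ i, N0 ≤ i → t i ≠ .inl (R.j0, 0) := fun i hi h => hN0 i hi h
  have hinr : ∀ n i, N0 ≤ i → t i ≠ .inr n := by
    intro n
    induction n with
    | zero =>
      intro i hi h
      have h3 := h1 i
      rw [h] at h3
      rcases h4 : t (i + 1) with y | m
      · rw [h4] at h3
        simp only [mat, ne_eq, ite_eq_right_iff, one_ne_zero, imp_false, not_not] at h3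
        exact hroot (i + 1) (by omega) (by rw [h4, h3.2])
      · rw [h4] at h3
        simp [mat] at h3
    | succ n ih =>
      intro i hi h
      have h3 := h1 i
      rw [h] at h3
      rcases h4 : t (i + 1) with y | m
      · rw [h4] at h3
        simp [mat] at h3
      · rw [h4] at h3
        simp only [mat, ne_eq, ite_eq_right_iff, one_ne_zero, imp_false, not_not] at h3
        exact ih (i + 1) (by omega) (by rw [h4]; congr 1; omega)
  have hinl : ∀ i, N0 ≤ i → ∃ j k, t i = .inl (j, k) := by
    intro i hi
    rcases h4 : t i with ⟨j, k⟩ | m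
    · exact ⟨j, k, rfl⟩
    · exact absurd h4 (hinr m i hi)
  have hstep : ∀ i j k, N0 ≤ i → t i = .inl (j, k) →
      t (i + 1) = .inl (j, k + 1) ∨ (j = R.j0 ∧ ∃ j' k', j' ≠ R.j0 ∧ t (i + 1) = .inl (j', k')) := by
    intro i j k hi h
    obtain ⟨j', k', h4⟩ := hinl (i + 1) (by omega)
    have h3 := h1 i
    have h5 := hroot (i + 1) (by omega)
    rw [h4] at h5
    rw [h, h4] at h3
    by_contra hcon
    rw [not_or] at hcon
    obtain ⟨hc1, hc2⟩ := hcon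
    apply h3
    simp only [mat]
    have e1 : ¬ (((j, k) : J × ℕ) = (j', k' - 1) ∧ k' ≠ 0) := by
      rintro ⟨h, h'⟩
      obtain ⟨h6, h7⟩ := Prod.mk.inj h
      apply hc1
      rw [h4, h6, h7, Nat.sub_add_cancel (by omega)]
    have e3 : ¬ (j = R.j0 ∧ ((j', k') : J × ℕ) = (R.j0, 0)) := by
      rintro ⟨-, h⟩
      exact h5 (by rw [h])
    rw [if_neg e1, if_neg e3]
    by_cases hs : ((j, k) : J × ℕ) = (R.j0, R.src j' k')
    · obtain ⟨h6, h7⟩ := Prod.mk.inj hs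
      rw [if_pos hs]
      by_cases hj' : j' = R.j0
      · rw [hj', R.hN0]
      · exact absurd ⟨h6, j', k', hj', h4⟩ hc2
    · rw [if_neg hs]
  by_cases hex : ∃ N c j, N0 ≤ N ∧ j ≠ R.j0 ∧ t N = .inl (j, c)
  · obtain ⟨N, c, j, hN, hj, ht⟩ := hex
    refine ⟨j, N, c, fun i => ?_⟩
    induction i with
    | zero => exact ht
    | succ i ih =>
      rcases hstep (N + i) j (c + i) (by omega) ih with h | h
      · exact h
      · exact absurd h.1 hj
  · push Not at hex
    obtain ⟨j, c, ht⟩ := hinl N0 le_rfl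
    refine ⟨j, N0, c, fun i => ?_⟩
    induction i with
    | zero => exact ht
    | succ i ih =>
      rcases hstep (N0 + i) j (c + i) (by omega) ih with h | ⟨-, j', k', hj', h⟩
      · exact h
      · exact absurd h (hex (N0 + i + 1) k' j' (by omega) hj')

/-- product along the ray -/
noncomputable def prd (q : ℝ≥0∞) (j : J) (k : ℕ) : ℝ≥0∞ :=
  ∏ i ∈ Finset.range k, ((R.a j i : ℝ≥0∞) * q)

lemma prd_ne_zero (q : ℝ≥0∞) (hq : q ≠ 0) (j : J) (k : ℕ) : R.prd q j k ≠ 0 := by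
  unfold prd
  rw [Finset.prod_ne_zero_iff]
  intro i _
  exact mul_ne_zero (by exact_mod_cast R.ha j i) hq

lemma prd_ne_top (q : ℝ≥0∞) (hq : q ≠ ⊤) (j : J) (k : ℕ) : R.prd q j k ≠ ⊤ := by
  unfold prd
  exact ENNReal.prod_ne_top fun i _ => ENNReal.mul_ne_top (by simp) hq

lemma phi_ratio (q : ℝ≥0∞) (hq : q ≠ 0) (hq' : q ≠ ⊤) (j : J) (hj : j ≠ R.j0) (k : ℕ) :
    (R.prd q j k)⁻¹ * R.phi q j k
      = ∑ r ∈ Finset.range (k + 1), (R.prd q j r)⁻¹ * (R.N j r * q ^ (R.src j r + 1)) := by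
  induction k with
  | zero => simp [prd, phi, hj]
  | succ k ih =>
    rw [Finset.sum_range_succ, ← ih]
    simp only [phi]
    rw [mul_add]
    congr 1
    have h1 : R.prd q j (k + 1) = R.prd q j k * (R.a j k * q) := Finset.prod_range_succ _ _
    have h2 : (R.a j k : ℝ≥0∞) * q ≠ 0 := mul_ne_zero (by exact_mod_cast R.ha j k) hq
    have h3 : (R.a j k : ℝ≥0∞) * q ≠ ⊤ := ENNReal.mul_ne_top (by simp) hq'
    rw [h1, ENNReal.mul_inv (Or.inr h3) (Or.inr h2)]
    calc _ = (R.prd q j k)⁻¹ * R.phi q j k * (((R.a j k : ℝ≥0∞) * q)⁻¹ * ((R.a j k : ℝ≥0∞) * q)) := by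
          ring
      _ = _ := by rw [ENNReal.inv_mul_cancel h2 h3, mul_one]

lemma iSup_ratio (q : ℝ≥0∞) (hq : q ≠ 0) (hq' : q ≠ ⊤) (j : J) (hj : j ≠ R.j0) :
    ⨆ k, (R.prd q j k)⁻¹ * R.phi q j k
      = ∑' r, (R.prd q j r)⁻¹ * (R.N j r * q ^ (R.src j r + 1)) := by
  simp_rw [R.phi_ratio q hq hq' j hj]
  rw [ENNReal.tsum_eq_iSup_nat]
  exact (monotone_nat_of_le_succ (f := fun k => ∑ r ∈ Finset.range k,
    (R.prd q j r)⁻¹ * (R.N j r * q ^ (R.src j r + 1))) (fun k => by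
      rw [Finset.sum_range_succ]; exact le_self_add)).iSup_nat_add 1

lemma iSup_ratio_j0 (q : ℝ≥0∞) (hq : q ≠ 0) (hq' : q ≠ ⊤) :
    ⨆ k, (R.prd q R.j0 k)⁻¹ * R.phi q R.j0 k ≠ ⊤ := by
  have : ∀ k, (R.prd q R.j0 k)⁻¹ * R.phi q R.j0 k = 1 := by
    intro k
    rw [phi_j0]
    simp only [prd, R.ha0, Nat.cast_one, one_mul, Finset.prod_const, Finset.card_range]
    exact ENNReal.inv_mul_cancel (pow_ne_zero _ hq) (ENNReal.pow_ne_top hq')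
  simp [this]

end Ray

lemma iSup_tail_iff (f y : ℕ → ℝ≥0∞) (N : ℕ) (γ₁ γ₂ : ℝ≥0∞) (h0 : γ₁ ≠ 0) (ht : γ₂ ≠ ⊤)
    (hf : ∀ k, f k ≠ ⊤) (h1 : ∀ i, γ₁ * y i ≤ f (N + i)) (h2 : ∀ i, f (N + i) ≤ γ₂ * y i) :
    (⨆ k, f k) ≠ ⊤ ↔ (⨆ i, y i) ≠ ⊤ := by
  constructor
  · intro h hy
    have : γ₁ * ⨆ i, y i ≤ ⨆ k, f k := by
      rw [ENNReal.mul_iSup]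
      exact iSup_le fun i => (h1 i).trans (le_iSup f _)
    rw [hy, ENNReal.mul_top h0] at this
    exact h (top_le_iff.1 this)
  · intro h
    refine ne_top_of_le_ne_top (b := (∑ k ∈ Finset.range N, f k) + γ₂ * ⨆ i, y i) ?_ ?_
    · exact ENNReal.add_ne_top.2 ⟨ENNReal.sum_ne_top.2 fun k _ => hf k, ENNReal.mul_ne_top ht h⟩
    · refine iSup_le fun k => ?_
      by_cases hk : k < N
      · exact (Finset.single_le_sum (f := f) (fun _ _ => zero_le) (Finset.mem_range.2 hk)).trans
          le_self_add
      · obtain ⟨i, rfl⟩ := Nat.exists_eq_add_of_le (not_lt.1 hk)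
        refine (h2 i).trans (le_trans ?_ le_add_self)
        gcongr
        exact le_iSup y i

namespace Ray
variable {J : Type} (R : Ray J) (l : ℕ → ℕ) (ell : J × ℕ → ℕ)

lemma mpow_ne_zero (q : ℝ≥0∞) (hq : q ≠ 0) (hell : ∀ x, x.2 ≤ ell x) (u w : (J × ℕ) ⊕ ℕ) :
    ∃ n, mpow (scl (R.mat l ell) q) n u w ≠ 0 :=
  mpow_ne_zero_of_reach _ q hq u w ((R.reach_to l ell u).trans (R.reach_from l ell hell w))

lemma green_ne_top (q : ℝ≥0∞) (hq : q ≠ 0) (hq' : q ≠ ⊤) (hell : ∀ x, x.2 ≤ ell x)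
    (h : q * R.SS l ell q < 1) (u w : (J × ℕ) ⊕ ℕ) :
    green (scl (R.mat l ell) q) u w ≠ ⊤ := by
  obtain ⟨n, hn⟩ := R.mpow_ne_zero l ell q hq hell R.root u
  intro ht
  have h1 := mpow_mul_green_le (scl (R.mat l ell) q) n R.root u w
  rw [ht, ENNReal.mul_top hn] at h1
  exact R.green_root_ne_top l ell q hq hq' h w (top_le_iff.1 h1)

lemma green_eq_top (q : ℝ≥0∞) (hq : q ≠ 0) (hell : ∀ x, x.2 ≤ ell x)
    (h : q * R.SS l ell q = 1) (u : (J × ℕ) ⊕ ℕ) :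
    green (scl (R.mat l ell) q) u u = ⊤ := by
  obtain ⟨n, hn⟩ := R.mpow_ne_zero l ell q hq hell u R.root
  obtain ⟨m, hm⟩ := R.mpow_ne_zero l ell q hq hell R.root u
  have h1 := mpow_mul_green_le (scl (R.mat l ell) q) n u R.root R.root
  rw [R.green_root_top l ell q h, ENNReal.mul_top hn, top_le_iff] at h1
  have h2 := green_mul_mpow_le (scl (R.mat l ell) q) m u R.root u
  rw [h1, ENNReal.top_mul hm] at h2
  exact top_le_iff.1 h2

lemma mpow_ne_top (q : ℝ≥0∞) (hg : ∀ u w, green (scl (R.mat l ell) q) u w ≠ ⊤) (n : ℕ)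
    (u w : (J × ℕ) ⊕ ℕ) : mpow (scl (R.mat l ell) q) n u w ≠ ⊤ :=
  ne_top_of_le_ne_top (hg u w) (ENNReal.le_tsum (f := fun n => mpow (scl (R.mat l ell) q) n u w) n)

lemma criterion (q : ℝ≥0∞) (hq : q ≠ 0) (hq' : q ≠ ⊤) (hell : ∀ x, x.2 ≤ ell x)
    (hg : ∀ u w, green (scl (R.mat l ell) q) u w ≠ ⊤)
    (t : ℕ → (J × ℕ) ⊕ ℕ) (h1 : ∀ i, R.mat l ell (t i) (t (i + 1)) ≠ 0)
    (j : J) (N c : ℕ) (ht : ∀ i, t (N + 1 + i) = .inl (j, c + i)) :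
    (⨆ k : ℕ, (∏ i ∈ Finset.range (k + 1), scl (R.mat l ell) q (t i) (t (i + 1)))⁻¹ *
        green (scl (R.mat l ell) q) (t 0) (t (k + 1))) ≠ ⊤ ↔
      (⨆ k, (R.prd q j k)⁻¹ * R.phi q j k) ≠ ⊤ := by
  set B := scl (R.mat l ell) q with hB
  set X : ℕ → ℝ≥0∞ := fun i => ∏ r ∈ Finset.range i, ((R.a j (c + r) : ℝ≥0∞) * q) with hX
  set D : ℕ → ℝ≥0∞ := fun k => ∏ i ∈ Finset.range k, B (t i) (t (i + 1)) with hD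
  have hX0 : ∀ i, X i ≠ 0 := fun i => Finset.prod_ne_zero_iff.2 fun r _ =>
    mul_ne_zero (by exact_mod_cast R.ha j _) hq
  have hXt : ∀ i, X i ≠ ⊤ := fun i => ENNReal.prod_ne_top fun r _ =>
    ENNReal.mul_ne_top (by simp) hq'
  have hD0 : ∀ i, D i ≠ 0 := fun i => Finset.prod_ne_zero_iff.2 fun r _ =>
    mul_ne_zero (by exact_mod_cast h1 r) hq
  have hDt : ∀ i, D i ≠ ⊤ := fun i => ENNReal.prod_ne_top fun r _ =>
    ENNReal.mul_ne_top (by simp) hq'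
  have hDX : ∀ i, D (N + 1 + i) = D (N + 1) * X i := by
    intro i
    simp only [hD, hX]
    rw [Finset.prod_range_add]
    congr 1
    refine Finset.prod_congr rfl fun r _ => ?_
    rw [ht r, show N + 1 + r + 1 = N + 1 + (r + 1) by ring, ht (r + 1)]
    simp only [hB, scl]
    rw [← add_assoc, mat_step]
  have hPX : ∀ i, R.prd q j (c + i) = R.prd q j c * X i := by
    intro i
    simp only [hX, prd]
    rw [Finset.prod_range_add]
  set y : ℕ → ℝ≥0∞ := fun i => (X i)⁻¹ * R.phi q j (c + i) with hy
  obtain ⟨n, hn⟩ := R.mpow_ne_zero l ell q hq hell (t 0) R.root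
  obtain ⟨m, hm⟩ := R.mpow_ne_zero l ell q hq hell R.root (t 0)
  rw [← hB] at hn hm
  have hmt : mpow B m R.root (t 0) ≠ ⊤ := R.mpow_ne_top l ell q hg m _ _
  have hg0 : green B R.root R.root ≠ 0 := by
    rw [green_eq, if_pos rfl]; simp
  have hlow : ∀ k, mpow B n (t 0) R.root * green B R.root R.root * R.phi q j k
      ≤ green B (t 0) (.inl (j, k)) := by
    intro k
    have := mpow_mul_green_le B n (t 0) R.root (.inl (j, k))
    rw [hB, green_root_phi, ← hB] at this
    calc _ = _ := by ring
      _ ≤ _ := this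
  have hup : ∀ k, green B (t 0) (.inl (j, k))
      ≤ (mpow B m R.root (t 0))⁻¹ * green B R.root R.root * R.phi q j k := by
    intro k
    have := mpow_mul_green_le B m R.root (t 0) (.inl (j, k))
    conv_rhs at this => rw [hB, green_root_phi, ← hB]
    calc _ = (mpow B m R.root (t 0))⁻¹ * (mpow B m R.root (t 0) * green B (t 0) (.inl (j, k))) := by
          rw [← mul_assoc, ENNReal.inv_mul_cancel hm hmt, one_mul]
      _ ≤ (mpow B m R.root (t 0))⁻¹ * (R.phi q j k * green B R.root R.root) := by gcongr
      _ = _ := by ring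
  have e1 : (⨆ k : ℕ, (D (k + 1))⁻¹ * green B (t 0) (t (k + 1))) ≠ ⊤ ↔ (⨆ i, y i) ≠ ⊤ := by
    refine iSup_tail_iff _ y N
      ((D (N + 1))⁻¹ * (mpow B n (t 0) R.root * green B R.root R.root))
      ((D (N + 1))⁻¹ * ((mpow B m R.root (t 0))⁻¹ * green B R.root R.root)) ?_ ?_ ?_ ?_ ?_
    · exact mul_ne_zero (ENNReal.inv_ne_zero.2 (hDt _)) (mul_ne_zero hn hg0)
    · exact ENNReal.mul_ne_top (ENNReal.inv_ne_top.2 (hD0 _))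
        (ENNReal.mul_ne_top (ENNReal.inv_ne_top.2 hm) (hg _ _))
    · intro k
      exact ENNReal.mul_ne_top (ENNReal.inv_ne_top.2 (hD0 _)) (hg _ _)
    · intro i
      rw [show N + i + 1 = N + 1 + i by ring, hDX, ht,
        ENNReal.mul_inv (Or.inl (hD0 _)) (Or.inl (hDt _))]
      calc _ = (D (N + 1))⁻¹ * (X i)⁻¹ *
            (mpow B n (t 0) R.root * green B R.root R.root * R.phi q j (c + i)) := by
            simp only [hy]; ring
        _ ≤ _ := by gcongr; exact hlow _
    · intro i
      rw [show N + i + 1 = N + 1 + i by ring, hDX, ht,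
        ENNReal.mul_inv (Or.inl (hD0 _)) (Or.inl (hDt _))]
      calc _ ≤ (D (N + 1))⁻¹ * (X i)⁻¹ *
            ((mpow B m R.root (t 0))⁻¹ * green B R.root R.root * R.phi q j (c + i)) := by
            gcongr; exact hup _
        _ = _ := by simp only [hy]; ring
  have e2 : (⨆ k : ℕ, (R.prd q j k)⁻¹ * R.phi q j k) ≠ ⊤ ↔ (⨆ i, y i) ≠ ⊤ := by
    have heq : ∀ i, (R.prd q j (c + i))⁻¹ * R.phi q j (c + i) = (R.prd q j c)⁻¹ * y i := by
      intro i
      rw [hPX, ENNReal.mul_inv (Or.inr (hXt _)) (Or.inr (hX0 _))]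
      simp only [hy]; ring
    refine iSup_tail_iff _ y c (R.prd q j c)⁻¹ (R.prd q j c)⁻¹ ?_ ?_ ?_ ?_ ?_
    · exact ENNReal.inv_ne_zero.2 (R.prd_ne_top q hq' j c)
    · exact ENNReal.inv_ne_top.2 (R.prd_ne_zero q hq j c)
    · intro k
      exact ENNReal.mul_ne_top (ENNReal.inv_ne_top.2 (R.prd_ne_zero q hq j k))
        (R.phi_ne_top q hq' j k)
    · intro i; exact (heq i).ge
    · intro i; exact (heq i).le
  exact e1.trans e2.symm

end Ray

/-- choice of the ray data -/
lemma exists_ray (J : Type) [Countable J] (I : J → Set ℝ) (hI : ∀ j, (I j).OrdConnected) (j0 : J) :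
    ∃ R : Ray J, R.j0 = j0 ∧ ∀ j, j ≠ j0 → ∀ β : ℝ,
      (⨆ k, (R.prd (ENNReal.ofReal (Real.exp (-β))) j k)⁻¹ *
        R.phi (ENNReal.ofReal (Real.exp (-β))) j k) ≠ ⊤ ↔ β ∈ I j := by
  choose a N ha hN hreal using fun j => integer_realize (I j) (hI j)
  obtain ⟨enc, henc⟩ := exists_injective_nat J
  let R : Ray J :=
    { j0 := j0
      a := fun j k => if j = j0 then 1 else a j k
      N := fun j k => if j = j0 then 0 else N j k
      src := fun j k => srcm k + enc j
      ha := fun j k => by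
        split_ifs
        · exact one_ne_zero
        · exact ha j k
      ha0 := fun k => by simp
      hN0 := fun k => by simp
      hN := fun j hj => by simpa [hj] using hN j
      hsrc := fun m => by
        have hfin : ((Set.Iic m).prod (Set.Iic (2 * m + 1)) : Set (ℕ × ℕ)).Finite :=
          (Set.finite_Iic m).prod (Set.finite_Iic (2 * m + 1))
        have hinj : Function.Injective (fun p : J × ℕ => (enc p.1, p.2)) := by
          rintro ⟨j, k⟩ ⟨j', k'⟩ h
          simp only [Prod.mk.injEq] at h
          rw [henc h.1, h.2]
        refine (hfin.preimage hinj.injOn).subset ?_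
        rintro ⟨j, k⟩ h
        change srcm k + enc j = m at h
        have := srcm_ge k
        exact ⟨by simp only [Set.mem_Iic]; omega, by simp only [Set.mem_Iic]; omega⟩ }
  refine ⟨R, rfl, fun j hj β => ?_⟩
  set q := ENNReal.ofReal (Real.exp (-β)) with hqdef
  have hq : q ≠ 0 := by simp [hqdef, Real.exp_pos]
  have hq' : q ≠ ⊤ := ENNReal.ofReal_ne_top
  rw [R.iSup_ratio q hq hq' j hj, ← hreal j β]
  have hterm : ∀ r, (R.prd q j r)⁻¹ * (R.N j r * q ^ (R.src j r + 1))
      = q ^ (enc j + 1) * ENNReal.ofReal ((N j r : ℝ) / (∏ i ∈ Finset.range r, (a j i : ℝ)) *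
          Real.exp (((r : ℝ) - srcm r) * β)) := by
    intro r
    have hap : ∀ i, (0 : ℝ) < a j i := fun i => by exact_mod_cast Nat.pos_of_ne_zero (ha j i)
    have hprod : (0 : ℝ) < ∏ i ∈ Finset.range r, (a j i : ℝ) :=
      Finset.prod_pos fun i _ => hap i
    have e1 : R.prd q j r
        = ENNReal.ofReal ((∏ i ∈ Finset.range r, (a j i : ℝ)) * Real.exp (-β) ^ r) := by
      have : (∏ i ∈ Finset.range r, (a j i : ℝ)) * Real.exp (-β) ^ r
          = ∏ i ∈ Finset.range r, ((a j i : ℝ) * Real.exp (-β)) := by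
        rw [Finset.prod_mul_distrib]; simp
      rw [this, ENNReal.ofReal_prod_of_nonneg (fun i _ => by positivity)]
      simp only [Ray.prd]
      refine Finset.prod_congr rfl fun i _ => ?_
      rw [ENNReal.ofReal_mul (by positivity)]
      simp [R, hj, hqdef]
    have e2 : (R.N j r : ℝ≥0∞) = ENNReal.ofReal (N j r) := by simp [R, hj]
    have e3 : R.src j r = srcm r + enc j := rfl
    rw [e1, e2, e3, hqdef, ← ENNReal.ofReal_inv_of_pos (by positivity),
      ← ENNReal.ofReal_pow (by positivity), ← ENNReal.ofReal_pow (by positivity),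
      ← ENNReal.ofReal_mul (by positivity), ← ENNReal.ofReal_mul (by positivity),
      ← ENNReal.ofReal_mul (by positivity)]
    congr 1
    have e4 : Real.exp (((r : ℝ) - srcm r) * β) = (Real.exp (-β) ^ r)⁻¹ * Real.exp (-β) ^ srcm r := by
      rw [← Real.exp_nat_mul, ← Real.exp_nat_mul, ← Real.exp_neg, ← Real.exp_add]
      congr 1; ring
    rw [e4, mul_inv, show srcm r + enc j + 1 = (enc j + 1) + srcm r by ring, pow_add]
    ring
  simp_rw [hterm]
  rw [ENNReal.tsum_mul_left]
  constructor
  · intro h ht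
    rw [ht, ENNReal.mul_top (pow_ne_zero _ hq)] at h
    exact h rfl
  · intro h
    exact ENNReal.mul_ne_top (ENNReal.pow_ne_top hq') h

/-- realization of a prescribed family of intervals by a recurrent
row-finite strongly connected graph. -/
theorem stmt_1 (h : ℝ) (hpos : 0 < h) (J : Type) [Countable J] [Nonempty J]
    (I : J → Set ℝ) (hI : ∀ j : J, I j ⊆ Set.Ioi h ∧ (I j).OrdConnected)
    (hmax : ∃ j₀ : J, I j₀ = Set.Ioi h) :
    ∃ G : DirGraph, G.StronglyConnected ∧ G.RowFinite ∧ Infinite G.V ∧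
      (∀ v : G.V,
        Filter.limsup (fun n : ℕ => (G.Apow (fun _ => 0) 0 n v v) ^ ((n : ℝ)⁻¹)) Filter.atTop
          = ENNReal.ofReal (Real.exp h)) ∧
      (∀ v : G.V, ∑' n : ℕ, G.Apow (fun _ => 1) h n v v = ⊤) ∧
      ∃ τ : J → (ℕ → G.V),
        (∀ j : J, G.IsExitPath (τ j)) ∧
        (∀ j j' : J, G.TailEquiv (τ j) (τ j') → j = j') ∧
        (∀ t : ℕ → G.V, G.IsExitPath t → ∃ j : J, G.TailEquiv (τ j) t) ∧
        (∀ (β : ℝ) (j : J) (t : ℕ → G.V), G.IsExitPath t → G.TailEquiv (τ j) t →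
          ((((∑' n : ℕ, G.Apow (fun _ => 1) β n (t 0) (t 0)) ≠ ⊤) ∧
            (⨆ k : ℕ, (∏ i ∈ Finset.range (k + 1), G.Amat (fun _ => 1) β (t i) (t (i + 1)))⁻¹ *
                ∑' n : ℕ, G.Apow (fun _ => 1) β n (t 0) (t (k + 1))) ≠ ⊤) ↔ β ∈ I j)) := by
  obtain ⟨j0, hj0⟩ := hmax
  obtain ⟨R, hR0, hR⟩ := exists_ray J I (fun j => (hI j).2) j0
  obtain ⟨l, ell, hell, hS⟩ := R.exists_params (Real.exp (-h)) (Real.exp_pos _)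
    (by rw [Real.exp_lt_one_iff]; linarith)
  set A := R.mat l ell with hA
  have hq0 : ∀ β : ℝ, ENNReal.ofReal (Real.exp (-β)) ≠ 0 := fun β => by simp [Real.exp_pos]
  have hfin : ∀ β > h, ∀ u w, green (scl A (ENNReal.ofReal (Real.exp (-β)))) u w ≠ ⊤ := by
    intro β hβ
    refine R.green_ne_top l ell _ (hq0 β) ENNReal.ofReal_ne_top hell ?_
    have hlt : ENNReal.ofReal (Real.exp (-β)) < ENNReal.ofReal (Real.exp (-h)) := by
      rw [ENNReal.ofReal_lt_ofReal_iff (Real.exp_pos _), Real.exp_lt_exp]; linarith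
    have hSne : R.SS l ell (ENNReal.ofReal (Real.exp (-h))) ≠ ⊤ := by
      intro ht
      rw [ht, ENNReal.mul_top (hq0 h)] at hS
      exact absurd hS (by simp)
    have hSne0 : R.SS l ell (ENNReal.ofReal (Real.exp (-h))) ≠ 0 := by
      intro ht
      rw [ht, mul_zero] at hS
      exact zero_ne_one hS
    calc _ ≤ ENNReal.ofReal (Real.exp (-β)) * R.SS l ell (ENNReal.ofReal (Real.exp (-h))) := by
          gcongr; exact R.SS_mono l ell hlt.le
      _ < ENNReal.ofReal (Real.exp (-h)) * R.SS l ell (ENNReal.ofReal (Real.exp (-h))) :=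
          ENNReal.mul_lt_mul_left hSne0 hSne hlt
      _ = 1 := hS
  have htop : ∀ β ≤ h, ∀ u, green (scl A (ENNReal.ofReal (Real.exp (-β)))) u u = ⊤ := by
    intro β hβ u
    rw [← top_le_iff, ← R.green_eq_top l ell _ (hq0 h) hell hS u]
    refine ENNReal.tsum_le_tsum fun n => ?_
    rw [← hA, mpow_scale A _ n u u, mpow_scale A (ENNReal.ofReal (Real.exp (-β))) n u u]
    gcongr
  have hAp1 : ∀ (β : ℝ) (n : ℕ) (u w : (J × ℕ) ⊕ ℕ),
      (ofMat ((J × ℕ) ⊕ ℕ) A).Apow (fun _ => 1) β n u w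
        = mpow (scl A (ENNReal.ofReal (Real.exp (-β)))) n u w := by
    intro β n u w
    rw [Apow_ofMat, mul_one]
  have hAp0 : ∀ (n : ℕ) (u w : (J × ℕ) ⊕ ℕ),
      (ofMat ((J × ℕ) ⊕ ℕ) A).Apow (fun _ => 0) 0 n u w = mpow (scl A 1) n u w := by
    intro n u w
    rw [Apow_ofMat]; simp
  have hgr : ∀ (β : ℝ) (u w : (J × ℕ) ⊕ ℕ),
      ∑' n, (ofMat ((J × ℕ) ⊕ ℕ) A).Apow (fun _ => 1) β n u w
        = green (scl A (ENNReal.ofReal (Real.exp (-β)))) u w := by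
    intro β u w
    exact tsum_congr fun n => hAp1 β n u w
  have hexit : ∀ t : ℕ → (J × ℕ) ⊕ ℕ, (ofMat ((J × ℕ) ⊕ ℕ) A).IsExitPath t →
      (∀ i, A (t i) (t (i + 1)) ≠ 0) ∧
      ∀ M : Set ((J × ℕ) ⊕ ℕ), M.Finite → ∃ N : ℕ, ∀ i : ℕ, N ≤ i → t i ∉ M := by
    intro t ht
    exact ⟨fun i => (exists_edge A _ _).1 (ht.1 i), ht.2⟩
  have hlim : ∀ v : (J × ℕ) ⊕ ℕ,
      Filter.limsup (fun n : ℕ => (mpow (scl A 1) n v v) ^ ((n : ℝ)⁻¹)) Filter.atTop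
        = ENNReal.ofReal (Real.exp h) := by
    intro v
    refine limsup_root (fun n => mpow (scl A 1) n v v) h (fun β hβ => ?_) ?_
    · have := hfin β hβ v v
      simp only [green, mpow_scale A (ENNReal.ofReal (Real.exp (-β)))] at this
      exact this
    · have := htop h le_rfl v
      simp only [green, mpow_scale A (ENNReal.ofReal (Real.exp (-h)))] at this
      exact this
  refine ⟨ofMat ((J × ℕ) ⊕ ℕ) A, ?_, rowFinite_ofMat A (R.row_finite l ell), ?_, ?_, ?_,
    fun j i => (.inl (j, i) : (J × ℕ) ⊕ ℕ), ?_, ?_, ?_, ?_⟩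
  · intro u w
    exact path_of_reach A u w ((R.reach_to l ell u).trans (R.reach_from l ell hell w))
  · exact (inferInstance : Infinite ((J × ℕ) ⊕ ℕ))
  · intro v
    refine Eq.trans ?_ (hlim v)
    congr 1
    funext n
    exact congrArg (fun z : ℝ≥0∞ => z ^ ((n : ℝ)⁻¹)) (hAp0 n v v)
  · intro v
    exact (hgr h v v).trans (htop h le_rfl v)
  · intro j
    refine ⟨fun i => (exists_edge A _ _).2 ?_, fun M hM => ?_⟩
    · rw [hA, R.mat_step]; exact R.ha j i
    · have hinj : Function.Injective (fun i : ℕ => (.inl (j, i) : (J × ℕ) ⊕ ℕ)) := by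
        intro i i' hii
        simpa using hii
      have hpre : {i : ℕ | (.inl (j, i) : (J × ℕ) ⊕ ℕ) ∈ M}.Finite := hM.preimage hinj.injOn
      obtain ⟨b, hb⟩ := hpre.bddAbove
      refine ⟨b + 1, fun i hi hmem => ?_⟩
      have := hb hmem
      omega
  · rintro j j' ⟨k, N, hk⟩
    have h1 : (.inl (j, ((N : ℤ) + k).toNat) : (J × ℕ) ⊕ ℕ) = .inl (j', N) := (hk N le_rfl).2
    exact (Prod.mk.inj (Sum.inl.inj h1)).1
  · intro t ht
    obtain ⟨h1, h2⟩ := hexit t ht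
    obtain ⟨j, N, c, hc⟩ := R.exit_class l ell t h1 h2
    refine ⟨j, (c : ℤ) - N, N, fun i hi => ⟨by omega, ?_⟩⟩
    obtain ⟨m, rfl⟩ := Nat.exists_eq_add_of_le hi
    refine Eq.trans ?_ (hc m).symm
    have : (((N + m : ℕ) : ℤ) + ((c : ℤ) - N)).toNat = c + m := by omega
    rw [this]
  · intro β j t ht htail
    obtain ⟨h1, h2⟩ := hexit t ht
    obtain ⟨k, N, hk⟩ := htail
    by_cases hβ : h < β
    swap
    · constructor
      · rintro ⟨h3, -⟩
        exact absurd ((hgr β (t 0) (t 0)).trans (htop β (not_lt.1 hβ) (t 0))) h3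
      · intro h3
        exact absurd ((hI j).1 h3) hβ
    have hc : ∀ i, t (N + 1 + i) = (.inl (j, (((N + 1 : ℕ) : ℤ) + k).toNat + i) : (J × ℕ) ⊕ ℕ) := by
      intro i
      refine (hk (N + 1 + i) (by omega)).2.symm.trans ?_
      have h3 := (hk N le_rfl).1
      have : (((N + 1 + i : ℕ) : ℤ) + k).toNat = (((N + 1 : ℕ) : ℤ) + k).toNat + i := by omega
      rw [this]
    have hcrit := R.criterion l ell (ENNReal.ofReal (Real.exp (-β))) (hq0 β) ENNReal.ofReal_ne_top
      hell (hfin β hβ) t h1 j N _ hc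
    have hfinal : (⨆ k, (R.prd (ENNReal.ofReal (Real.exp (-β))) j k)⁻¹ *
        R.phi (ENNReal.ofReal (Real.exp (-β))) j k) ≠ ⊤ ↔ β ∈ I j := by
      by_cases hj : j = j0
      · rw [hj, hj0, ← hR0]
        exact ⟨fun _ => hβ, fun _ => R.iSup_ratio_j0 _ (hq0 β) ENNReal.ofReal_ne_top⟩
      · exact hR j hj β
    rw [← hfinal, ← hcrit, ← hA]
    have hsup : (⨆ k : ℕ, (∏ i ∈ Finset.range (k + 1),
          (ofMat ((J × ℕ) ⊕ ℕ) A).Amat (fun _ => 1) β (t i) (t (i + 1)))⁻¹ *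
            ∑' n : ℕ, (ofMat ((J × ℕ) ⊕ ℕ) A).Apow (fun _ => 1) β n (t 0) (t (k + 1)))
        = ⨆ k : ℕ, (∏ i ∈ Finset.range (k + 1),
          scl A (ENNReal.ofReal (Real.exp (-β))) (t i) (t (i + 1)))⁻¹ *
            green (scl A (ENNReal.ofReal (Real.exp (-β)))) (t 0) (t (k + 1)) := by
      have hAm : (ofMat ((J × ℕ) ⊕ ℕ) A).Amat (fun _ => 1) β
          = scl A (ENNReal.ofReal (Real.exp (-β))) := by rw [Amat_ofMat, mul_one]
      rw [hAm]
      exact iSup_congr fun k => congrArg _ (hgr β (t 0) (t (k + 1)))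
    constructor
    · rintro ⟨-, h4⟩ h5
      exact h4 (hsup.trans h5)
    · intro h4
      exact ⟨fun h5 => hfin β hβ (t 0) (t 0) ((hgr β (t 0) (t 0)).symm.trans h5),
        fun h5 => h4 (hsup.symm.trans h5)⟩
end

section
/- Let G be a cofinal countable directed graph whose set NW_G of non-wandering vertices is nonempty. Then: (i) NW_G is a hereditary subset of V; (ii) the subgraph with vertex set NW_G and edge set {e ∈ E : s(e) ∈ NW_G} is strongly connected; (iii) for every vertex v ∈ V there is N_v ∈ ℕ such that every finite path ν with s(ν) = v and length |ν| ≥ N_v satisfies r(ν) ∈ NW_G. -/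
open scoped ENNReal NNReal Classical
open Filter MeasureTheory

namespace DirGraph

theorem isPath_iff (G : DirGraph) (μ : List G.E) :
    G.IsPath μ ↔ μ.IsChain (fun e f => G.r e = G.s f) := Iff.rfl

theorem path_nil (G : DirGraph) (u w : G.V) : G.IsPathFrom [] u w ↔ u = w := by
  simp [IsPathFrom, isPath_iff]

theorem path_cons (G : DirGraph) (e : G.E) (μ : List G.E) (u w : G.V) :
    G.IsPathFrom (e :: μ) u w ↔ G.s e = u ∧ G.IsPathFrom μ (G.r e) w := by
  cases μ with
  | nil => simp [IsPathFrom, isPath_iff]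
  | cons f μ =>
    simp only [IsPathFrom, isPath_iff, List.isChain_cons_cons, List.head?_cons,
      List.getLast?_cons_cons, Option.mem_def, Option.some.injEq, forall_eq']
    constructor
    · rintro ⟨⟨h1, h2⟩, h3, h4, -⟩
      exact ⟨h3, h2, h1.symm, h4, by simp⟩
    · rintro ⟨h3, h2, h1, h4, -⟩
      exact ⟨⟨h1.symm, h2⟩, h3, h4, by simp⟩

def Step (G : DirGraph) (u w : G.V) : Prop := ∃ e, G.s e = u ∧ G.r e = w

theorem reach_of_path (G : DirGraph) (μ : List G.E) : ∀ u w, G.IsPathFrom μ u w →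
    Relation.ReflTransGen G.Step u w := by
  induction μ with
  | nil => intro u w h; rw [path_nil] at h; subst h; exact .refl
  | cons e μ ih =>
    intro u w h
    rw [path_cons] at h
    exact .head ⟨e, h.1, rfl⟩ (ih _ _ h.2)

theorem path_of_reach (G : DirGraph) {u w : G.V} (h : Relation.ReflTransGen G.Step u w) :
    ∃ μ, G.IsPathFrom μ u w := by
  induction h using Relation.ReflTransGen.head_induction_on with
  | refl => exact ⟨[], (path_nil ..).2 rfl⟩
  | head h _ ih =>
    obtain ⟨e, h1, rfl⟩ := h
    obtain ⟨μ, hμ⟩ := ih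
    exact ⟨e :: μ, (path_cons ..).2 ⟨h1, hμ⟩⟩

theorem mem_NW (G : DirGraph) (v : G.V) :
    v ∈ G.NW ↔ ∃ e, G.s e = v ∧ Relation.ReflTransGen G.Step (G.r e) v := by
  constructor
  · rintro ⟨μ, hne, h⟩
    cases μ with
    | nil => exact absurd rfl hne
    | cons e μ =>
      rw [path_cons] at h
      exact ⟨e, h.1, reach_of_path _ _ _ _ h.2⟩
  · rintro ⟨e, h1, h2⟩
    obtain ⟨μ, hμ⟩ := path_of_reach _ h2
    exact ⟨e :: μ, by simp, (path_cons ..).2 ⟨h1, hμ⟩⟩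

theorem reach_NW (G : DirGraph) (hG : G.Cofinal) (w v : G.V) (hv : v ∈ G.NW) :
    Relation.ReflTransGen G.Step w v := by
  have key := hG {u | ∀ x, Relation.ReflTransGen G.Step u x → x ∈ G.NW →
    Relation.ReflTransGen G.Step w x} ⟨w, fun x h _ => h⟩
    (fun e he x hx hxn => he x (.head ⟨e, rfl, rfl⟩ hx) hxn)
    (by
      intro u _ _ hu x hx hxn
      rcases Relation.ReflTransGen.cases_head hx with rfl | ⟨y, ⟨e, h1, rfl⟩, h2⟩
      · obtain ⟨e, h1, h2⟩ := (mem_NW ..).1 hxn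
        exact hu e h1 _ h2 hxn
      · exact hu e h1 _ h2 hxn)
  have hm := Set.mem_univ v
  rw [← key] at hm
  exact hm v .refl hv

theorem NW_hered (G : DirGraph) (hG : G.Cofinal) : G.Hereditary G.NW := by
  intro e he
  obtain hr := reach_NW G hG (G.r e) _ he
  rcases Relation.ReflTransGen.cases_head hr with h | ⟨y, ⟨f, h1, rfl⟩, h2⟩
  · rwa [h]
  · exact (mem_NW ..).2 ⟨f, h1, h2.tail ⟨e, rfl, rfl⟩⟩

theorem path_in (G : DirGraph) (H : Set G.V) (hH : G.Hereditary H) (μ : List G.E) :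
    ∀ u w, u ∈ H → G.IsPathFrom μ u w → (∀ e ∈ μ, G.s e ∈ H) ∧ w ∈ H := by
  induction μ with
  | nil => intro u w hu h; rw [path_nil] at h; subst h; simpa using hu
  | cons e μ ih =>
    intro u w hu h
    rw [path_cons] at h
    obtain ⟨rfl, h⟩ := h
    have := ih _ _ (hH e hu) h
    exact ⟨by simpa using ⟨hu, this.1⟩, this.2⟩

end DirGraph


/-- the set of non-wandering vertices of a cofinal graph. -/
theorem stmt_2 (G : DirGraph) (hG : G.Cofinal) (hNW : G.NW.Nonempty) :
    G.Hereditary G.NW ∧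
    (∀ v ∈ G.NW, ∀ w ∈ G.NW,
      ∃ μ : List G.E, G.IsPathFrom μ v w ∧ ∀ e ∈ μ, G.s e ∈ G.NW) ∧
    (∀ v : G.V, ∃ N : ℕ, ∀ (μ : List G.E) (w : G.V),
      G.IsPathFrom μ v w → N ≤ μ.length → w ∈ G.NW) := by
  have hH := DirGraph.NW_hered G hG
  refine ⟨hH, ?_, ?_⟩
  · intro v hv w hw
    obtain ⟨μ, hμ⟩ := DirGraph.path_of_reach G (DirGraph.reach_NW G hG v w hw)
    exact ⟨μ, hμ, (DirGraph.path_in G _ hH μ v w hv hμ).1⟩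
  · have key := hG {v | ∃ N : ℕ, ∀ (μ : List G.E) (w : G.V),
      G.IsPathFrom μ v w → N ≤ μ.length → w ∈ G.NW} ?_ ?_ ?_
    · intro v
      have hm := Set.mem_univ v
      rw [← key] at hm
      exact hm
    · obtain ⟨v, hv⟩ := hNW
      exact ⟨v, 0, fun μ w h _ => (DirGraph.path_in G _ hH μ v w hv h).2⟩
    · rintro e ⟨N, hN⟩
      refine ⟨N, fun μ w h hl => hN (e :: μ) w ((DirGraph.path_cons ..).2 ⟨rfl, h⟩) ?_⟩
      simp only [List.length_cons]
      omega
    · intro v _ hfin h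
      have hf : {e : G.E | G.s e = v}.Finite := Set.not_infinite.1 hfin
      have h' : ∀ e : G.E, ∃ N : ℕ, G.s e = v → ∀ (μ : List G.E) (w : G.V),
          G.IsPathFrom μ (G.r e) w → N ≤ μ.length → w ∈ G.NW := by
        intro e
        by_cases he : G.s e = v
        · obtain ⟨N, hN⟩ := h e he
          exact ⟨N, fun _ => hN⟩
        · exact ⟨0, fun h => absurd h he⟩
      choose N hN using h'
      obtain ⟨M, hM⟩ := (hf.image N).bddAbove
      refine ⟨M + 1, fun μ w hp hl => ?_⟩
      cases μ with
      | nil => simp at hl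
      | cons e μ =>
        rw [DirGraph.path_cons] at hp
        have h1 : N e ≤ M := hM ⟨e, hp.1, rfl⟩
        simp only [List.length_cons] at hl
        exact hN e hp.1 μ w hp.2 (by omega)
end

section
/- Let G be a cofinal countable directed graph. Then no vertex v ∈ V ∖ NW_G is an infinite emitter; that is, every infinite emitter of G is a non-wandering vertex. -/
open scoped ENNReal NNReal Classical
open Filter MeasureTheory

/-- One-step relation of the graph. -/
def DirGraph.Step_s3 (G : DirGraph) (u w : G.V) : Prop := ∃ e : G.E, G.s e = u ∧ G.r e = w

/-- The saturation of the set of vertices reachable from `w`. -/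
inductive DirGraph.Hull (G : DirGraph) (w : G.V) : G.V → Prop
  | base (x : G.V) (h : Relation.ReflTransGen G.Step_s3 w x) : DirGraph.Hull G w x
  | sat (x : G.V) (h1 : ¬ G.IsSink x) (h2 : ¬ G.InfEmitter x)
      (h3 : ∀ e : G.E, G.s e = x → DirGraph.Hull G w (G.r e)) : DirGraph.Hull G w x

theorem DirGraph.cons_path (G : DirGraph) {w : G.V} (e : G.E) (μ : List G.E)
    (hμ : G.IsPathFrom μ (G.r e) w) : G.IsPathFrom (e :: μ) (G.s e) w := by
  obtain ⟨h1, h2, h3, h4⟩ := hμ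
  cases μ with
  | nil => exact ⟨List.isChain_singleton e, by simp, by simpa using h4 rfl, by simp⟩
  | cons f l =>
    refine ⟨List.isChain_cons_cons.2 ⟨(h2 f (by simp)).symm, h1⟩, by simp, ?_, by simp⟩
    intro e' he'
    exact h3 e' (by simpa [List.getLast?_cons_cons] using he')

theorem DirGraph.exists_path (G : DirGraph) {u w : G.V} (h : Relation.ReflTransGen G.Step_s3 u w) :
    ∃ μ : List G.E, G.IsPathFrom μ u w := by
  induction h using Relation.ReflTransGen.head_induction_on with
  | refl => exact ⟨[], List.isChain_nil, by simp, by simp, fun _ => rfl⟩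
  | head hs _ ih =>
    obtain ⟨e, rfl, rfl⟩ := hs
    obtain ⟨μ, hμ⟩ := ih
    exact ⟨e :: μ, G.cons_path e μ hμ⟩

/-- every infinite emitter of a cofinal graph is non-wandering. -/
theorem stmt_3 (G : DirGraph) (hG : G.Cofinal) (v : G.V) (hv : G.InfEmitter v) :
    v ∈ G.NW := by
  obtain ⟨e, he⟩ := hv.nonempty
  have hu := hG {x | G.Hull (G.r e) x} ⟨G.r e, .base _ .refl⟩
    (by
      intro f hf
      cases hf with
      | base _ h => exact .base _ (h.tail ⟨f, rfl, rfl⟩)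
      | sat _ _ _ h3 => exact h3 f rfl)
    (fun x h1 h2 h3 => .sat x h1 h2 h3)
  have hmem : G.Hull (G.r e) v := by
    have : v ∈ {x | G.Hull (G.r e) x} := hu ▸ Set.mem_univ v
    exact this
  cases hmem with
  | base _ h =>
    obtain ⟨μ, hμ⟩ := G.exists_path h
    have he' : G.s e = v := he
    have := G.cons_path e μ hμ
    rw [he'] at this
    exact ⟨e :: μ, by simp, this⟩
  | sat _ _ h2 _ => exact absurd hv h2
end

section
/- Let G be a cofinal countable directed graph, F : E → ℝ a function and β ∈ ℝ. Let ψ ∈ [0,∞)^V be an A(β)-harmonic vector which is not identically zero. Then ψ_v > 0 for every vertex v ∈ V, and all powers of A(β) are finite, i.e. A(β)ⁿ_{uw} < ∞ for all n ∈ ℕ and all u, w ∈ V. -/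
open scoped ENNReal NNReal Classical
open Filter MeasureTheory

/-- a nonzero harmonic vector on a cofinal graph is strictly positive,
and all powers of `A(β)` are finite. -/
theorem stmt_4 (G : DirGraph) (hG : G.Cofinal) (F : G.E → ℝ) (β : ℝ)
    (ψ : G.V → ℝ≥0) (hψ : G.Harmonic F β ψ) (hne : ψ ≠ 0) :
    (∀ v : G.V, 0 < ψ v) ∧ ∀ (n : ℕ) (u w : G.V), G.Apow F β n u w ≠ ⊤ := by
  have hAzero : ∀ v w : G.V, (∀ e : G.E, G.s e = v → G.r e ≠ w) → G.Amat F β v w = 0 := by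
    intro v w h
    unfold DirGraph.Amat
    rw [ENNReal.tsum_eq_zero]
    rintro ⟨e, he1, he2⟩
    exact absurd he2 (h e he1)
  have hApos : ∀ e : G.E, G.Amat F β (G.s e) (G.r e) ≠ 0 := by
    intro e h
    unfold DirGraph.Amat at h
    rw [ENNReal.tsum_eq_zero] at h
    have h1 := h ⟨e, rfl, rfl⟩
    rw [ENNReal.ofReal_eq_zero] at h1
    exact absurd (Real.exp_pos (-β * F e)) (not_lt.mpr h1)
  have hpos : ∀ v : G.V, 0 < ψ v := by
    intro v
    rw [pos_iff_ne_zero]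
    intro hv
    have hher : G.Hereditary {v | ψ v = 0} := by
      intro e he
      have he' : ψ (G.s e) = 0 := he
      have h := hψ (G.s e)
      rw [he', ENNReal.coe_zero, ENNReal.tsum_eq_zero] at h
      rcases mul_eq_zero.mp (h (G.r e)) with h1 | h1
      · exact absurd h1 (hApos e)
      · exact ENNReal.coe_eq_zero.mp h1
    have hsat : G.Saturated {v | ψ v = 0} := by
      intro v _ _ hs
      have h := hψ v
      have h0 : ∑' w : G.V, G.Amat F β v w * ψ w = 0 := by
        rw [ENNReal.tsum_eq_zero]
        intro w
        by_cases hw : ψ w = 0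
        · simp [hw]
        · rw [hAzero v w, zero_mul]
          intro e he hr
          exact hw (hr ▸ hs e he)
      rw [h0] at h
      exact ENNReal.coe_eq_zero.mp h.symm
    have huniv := hG {v | ψ v = 0} ⟨v, hv⟩ hher hsat
    apply hne
    funext u
    have hu : u ∈ {v | ψ v = 0} := huniv ▸ Set.mem_univ u
    exact hu
  refine ⟨hpos, ?_⟩
  have hpow : ∀ (n : ℕ) (u : G.V), ∑' w : G.V, G.Apow F β n u w * ψ w = (ψ u : ℝ≥0∞) := by
    intro n
    induction n with
    | zero =>
      intro u
      rw [tsum_eq_single u]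
      · simp [DirGraph.Apow]
      · intro w hw
        simp [DirGraph.Apow, hw.symm]
    | succ n ih =>
      intro u
      simp only [DirGraph.Apow]
      simp_rw [← ENNReal.tsum_mul_right]
      rw [ENNReal.tsum_comm, ← hψ u]
      refine tsum_congr fun x => ?_
      simp_rw [mul_assoc]
      rw [ENNReal.tsum_mul_left, ih x]
  intro n u w htop
  have h1 : G.Apow F β n u w * ψ w ≤ (ψ u : ℝ≥0∞) := by
    rw [← hpow n u]
    exact ENNReal.le_tsum w
  rw [htop, ENNReal.top_mul (by exact_mod_cast (hpos w).ne')] at h1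
  exact absurd h1 (by simp)
end

section
/- Let G be a cofinal countable directed graph, F : E → ℝ a function and β ∈ ℝ. Then: (1) every sink v ∈ V∞ is β-summable; (2) an infinite emitter v ∈ V∞ is β-summable if and only if Σ_{n≥0} A(β)ⁿ_{vv} < ∞, and this condition implies that all powers of A(β) are finite, i.e. A(β)ⁿ_{uw} < ∞ for all n ∈ ℕ and all u, w ∈ V. -/
open scoped ENNReal NNReal Classical
open Filter MeasureTheory

namespace DirGraph

theorem aux_S (G : DirGraph) (F : G.E → ℝ) (β : ℝ) (v w : G.V) :
    ∑' n : ℕ, G.Apow F β n w v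
      = (if w = v then 1 else 0) + ∑' x : G.V, G.Amat F β w x * ∑' n : ℕ, G.Apow F β n x v := by
  rw [tsum_eq_zero_add' ENNReal.summable]
  congr 1
  simp only [Apow]
  rw [ENNReal.tsum_comm]
  simp only [ENNReal.tsum_mul_left]

theorem aux_Amat_pos (G : DirGraph) (F : G.E → ℝ) (β : ℝ) (e : G.E) :
    G.Amat F β (G.s e) (G.r e) ≠ 0 := by
  intro h
  unfold Amat at h
  rw [ENNReal.tsum_eq_zero] at h
  have := h ⟨e, rfl, rfl⟩
  rw [ENNReal.ofReal_eq_zero] at this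
  exact absurd this (not_le.mpr (Real.exp_pos _))

theorem aux_edge (G : DirGraph) (F : G.E → ℝ) (β : ℝ) (v : G.V) (e : G.E) :
    G.Amat F β (G.s e) (G.r e) * ∑' n : ℕ, G.Apow F β n (G.r e) v
      ≤ ∑' n : ℕ, G.Apow F β n (G.s e) v := by
  rw [aux_S G F β v (G.s e)]
  exact le_trans (ENNReal.le_tsum (f := fun x => G.Amat F β (G.s e) x *
    ∑' n : ℕ, G.Apow F β n x v) (G.r e)) le_add_self

theorem aux_Amat_top (G : DirGraph) (F : G.E → ℝ) (β : ℝ) (u x : G.V)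
    (h : ¬ G.InfEmitter u) : G.Amat F β u x ≠ ⊤ := by
  have hf : {e : G.E | G.s e = u}.Finite := Set.not_infinite.mp h
  have hf2 : {e : G.E | G.s e = u ∧ G.r e = x}.Finite := hf.subset (fun e he => he.1)
  haveI : Finite {e : G.E // G.s e = u ∧ G.r e = x} := hf2.to_subtype
  haveI := Fintype.ofFinite {e : G.E // G.s e = u ∧ G.r e = x}
  unfold Amat
  rw [tsum_fintype]
  exact ENNReal.sum_ne_top.mpr (fun _ _ => ENNReal.ofReal_ne_top)

theorem aux_Amat_zero (G : DirGraph) (F : G.E → ℝ) (β : ℝ) (u x : G.V)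
    (h : ∀ e : G.E, G.s e = u → G.r e ≠ x) : G.Amat F β u x = 0 := by
  unfold Amat
  rw [ENNReal.tsum_eq_zero]
  rintro ⟨e, he1, he2⟩
  exact absurd he2 (h e he1)

theorem aux_all (G : DirGraph) (hG : G.Cofinal) (F : G.E → ℝ) (β : ℝ) (v : G.V)
    (hv : ∑' n : ℕ, G.Apow F β n v v ≠ ⊤) (w : G.V) :
    ∑' n : ℕ, G.Apow F β n w v ≠ ⊤ := by
  have key := hG {w | ∑' n : ℕ, G.Apow F β n w v ≠ ⊤} ⟨v, hv⟩ ?_ ?_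
  · have : w ∈ {w | ∑' n : ℕ, G.Apow F β n w v ≠ ⊤} := key ▸ Set.mem_univ w
    exact this
  · intro e he hr
    apply he
    have h := aux_edge G F β v e
    rw [hr, ENNReal.mul_top (aux_Amat_pos G F β e)] at h
    exact top_le_iff.mp h
  · intro u _ hu hr
    have hf : {e : G.E | G.s e = u}.Finite := Set.not_infinite.mp hu
    have hfin : (G.r '' {e : G.E | G.s e = u}).Finite := hf.image _
    show ∑' n : ℕ, G.Apow F β n u v ≠ ⊤
    rw [aux_S, tsum_eq_sum (s := hfin.toFinset)]
    · refine ENNReal.add_ne_top.mpr ⟨by split_ifs <;> simp, ?_⟩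
      refine ENNReal.sum_ne_top.mpr (fun x hx => ?_)
      obtain ⟨e, he, rfl⟩ := hfin.mem_toFinset.mp hx
      exact ENNReal.mul_ne_top (aux_Amat_top G F β u _ hu) (hr e he)
    · intro x hx
      rw [aux_Amat_zero, zero_mul]
      intro e he hex
      exact hx (hfin.mem_toFinset.mpr ⟨e, he, hex⟩)

theorem aux_reach (G : DirGraph) (hG : G.Cofinal) (F : G.E → ℝ) (β : ℝ) (v : G.V)
    (hv : G.InfEmitter v) (w : G.V) : ∑' n : ℕ, G.Apow F β n w v ≠ 0 := by
  intro hw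
  have key := hG {w | ∑' n : ℕ, G.Apow F β n w v = 0} ⟨w, hw⟩ ?_ ?_
  · have : v ∈ {w | ∑' n : ℕ, G.Apow F β n w v = 0} := key ▸ Set.mem_univ v
    have h2 : ∑' n : ℕ, G.Apow F β n v v = 0 := this
    rw [ENNReal.tsum_eq_zero] at h2
    have := h2 0
    simp [Apow] at this
  · intro e he
    have h := aux_edge G F β v e
    have he' : ∑' n : ℕ, G.Apow F β n (G.s e) v = 0 := he
    rw [he'] at h
    exact (mul_eq_zero.mp (nonpos_iff_eq_zero.mp h)).resolve_left (aux_Amat_pos G F β e)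
  · intro u _ hu hr
    show ∑' n : ℕ, G.Apow F β n u v = 0
    have huv : u ≠ v := fun h => hu (h ▸ hv)
    rw [aux_S, if_neg huv, zero_add, ENNReal.tsum_eq_zero]
    intro x
    by_cases hx : ∃ e : G.E, G.s e = u ∧ G.r e = x
    · obtain ⟨e, he, rfl⟩ := hx
      have h0 : ∑' n : ℕ, G.Apow F β n (G.r e) v = 0 := hr e he
      rw [h0, mul_zero]
    · rw [aux_Amat_zero, zero_mul]
      intro e he hex
      exact hx ⟨e, he, hex⟩

theorem aux_add (G : DirGraph) (F : G.E → ℝ) (β : ℝ) (n k : ℕ) (u w v : G.V) :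
    G.Apow F β n u w * G.Apow F β k w v ≤ G.Apow F β (n + k) u v := by
  induction n generalizing u with
  | zero =>
    rw [Nat.zero_add]
    simp only [Apow]
    split_ifs with h
    · rw [h, one_mul]
    · simp
  | succ n ih =>
    rw [Nat.succ_add]
    simp only [Apow]
    rw [← ENNReal.tsum_mul_right]
    refine ENNReal.tsum_le_tsum (fun x => ?_)
    rw [mul_assoc]
    exact mul_le_mul_right (ih x) _

end DirGraph

/-- β-summability of sinks and infinite emitters in a cofinal graph. -/
theorem stmt_5 (G : DirGraph) (hG : G.Cofinal) (F : G.E → ℝ) (β : ℝ) :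
    (∀ v : G.V, G.IsSink v → ∀ w : G.V, ∑' n : ℕ, G.Apow F β n w v ≠ ⊤) ∧
    (∀ v : G.V, G.InfEmitter v →
      (((∀ w : G.V, ∑' n : ℕ, G.Apow F β n w v ≠ ⊤) ↔ ∑' n : ℕ, G.Apow F β n v v ≠ ⊤) ∧
        ((∑' n : ℕ, G.Apow F β n v v ≠ ⊤) → ∀ (n : ℕ) (u w : G.V), G.Apow F β n u w ≠ ⊤))) := by
  refine ⟨fun v hv w => ?_, fun v hv => ⟨⟨fun h => h v, fun h w => G.aux_all hG F β v h w⟩, ?_⟩⟩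
  · refine G.aux_all hG F β v ?_ w
    rw [G.aux_S]
    have h0 : ∀ x, G.Amat F β v x = 0 := fun x =>
      G.aux_Amat_zero F β v x (fun e he => absurd he (hv e))
    simp [h0]
  · intro h n u w htop
    have h1 := G.aux_reach hG F β v hv w
    rw [Ne, ENNReal.tsum_eq_zero] at h1
    push Not at h1
    obtain ⟨k, hk⟩ := h1
    have h2 := G.aux_add F β n k u w v
    rw [htop, ENNReal.top_mul hk] at h2
    have h3 := ENNReal.le_tsum (f := fun n => G.Apow F β n u v) (n + k)
    exact G.aux_all hG F β v h u (top_le_iff.mp (h2.trans h3))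
end

section
/- Let G be a cofinal countable directed graph, F : E → ℝ a function and β ∈ ℝ. If there exists a nonzero A(β)-harmonic vector ψ ∈ [0,∞)^V, then limsup_n (A(β)ⁿ_{vv})^{1/n} ≤ 1 for every vertex v ∈ V. -/
open scoped ENNReal NNReal Classical
open Filter MeasureTheory

theorem DirGraph.harmonic_pow (G : DirGraph) (F : G.E → ℝ) (β : ℝ)
    (ψ : G.V → ℝ≥0) (hψ : G.Harmonic F β ψ) (n : ℕ) :
    ∀ v : G.V, ∑' w : G.V, G.Apow F β n v w * ψ w = (ψ v : ℝ≥0∞) := by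
  induction n with
  | zero =>
    intro v
    rw [tsum_eq_single v]
    · simp [DirGraph.Apow]
    · intro w hw
      simp [DirGraph.Apow, hw.symm]
  | succ n ih =>
    intro v
    simp only [DirGraph.Apow]
    simp_rw [← ENNReal.tsum_mul_right]
    rw [ENNReal.tsum_comm]
    simp_rw [mul_assoc, ENNReal.tsum_mul_left, ih]
    exact hψ v

theorem DirGraph.harmonic_ne_zero (G : DirGraph) (hG : G.Cofinal) (F : G.E → ℝ) (β : ℝ)
    (ψ : G.V → ℝ≥0) (hψ : G.Harmonic F β ψ) (hne : ψ ≠ 0) (v : G.V) : ψ v ≠ 0 := by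
  intro hv
  have key : ∀ u : G.V, ψ u = 0 ↔ ∀ e : G.E, G.s e = u → ψ (G.r e) = 0 := by
    intro u
    rw [← ENNReal.coe_eq_zero, ← hψ u, ENNReal.tsum_eq_zero]
    constructor
    · intro h e he
      have h1 := h (G.r e)
      rcases mul_eq_zero.1 h1 with h2 | h2
      · have h3 := ENNReal.tsum_eq_zero.1 h2 ⟨e, he, rfl⟩
        exact absurd (ENNReal.ofReal_eq_zero.1 h3) (not_le.2 (Real.exp_pos _))
      · exact_mod_cast h2
    · intro h w
      by_cases hw : ψ w = 0
      · simp [hw]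
      · have : G.Amat F β u w = 0 := by
          refine ENNReal.tsum_eq_zero.2 ?_
          rintro ⟨e, he, rfl⟩
          exact absurd (h e he) hw
        simp [this]
  have hH := hG {u | ψ u = 0} ⟨v, hv⟩ (fun e he => (key _).1 he e rfl)
    (fun u _ _ h => (key u).2 h)
  exact hne (funext fun u => (hH.symm ▸ Set.mem_univ u : u ∈ {u | ψ u = 0}))

/-- existence of a nonzero harmonic vector bounds the spectral radius by 1. -/
theorem stmt_6 (G : DirGraph) (hG : G.Cofinal) (F : G.E → ℝ) (β : ℝ)
    (ψ : G.V → ℝ≥0) (hψ : G.Harmonic F β ψ) (hne : ψ ≠ 0) :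
    ∀ v : G.V,
      Filter.limsup (fun n : ℕ => (G.Apow F β n v v) ^ ((n : ℝ)⁻¹)) Filter.atTop ≤ 1 := by
  intro v
  refine Filter.limsup_le_of_le (by isBoundedDefault) (Filter.Eventually.of_forall fun n => ?_)
  refine ENNReal.rpow_le_one ?_ (by positivity)
  have h1 : G.Apow F β n v v * ψ v ≤ 1 * ψ v := by
    rw [one_mul]
    calc _ ≤ ∑' w : G.V, G.Apow F β n v w * ψ w :=
          ENNReal.le_tsum (f := fun w => G.Apow F β n v w * (ψ w : ℝ≥0∞)) v
      _ = _ := G.harmonic_pow F β ψ hψ n v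
  exact (ENNReal.mul_le_mul_iff_left
    (by exact_mod_cast G.harmonic_ne_zero hG F β ψ hψ hne v) ENNReal.coe_ne_top).1 h1
end

section
/- Let G be a strongly connected countable directed graph with finitely many vertices, F : E → ℝ a function and β ∈ ℝ. If A(β) is transient, then the only A(β)-harmonic vector ψ ∈ [0,∞)^V is the zero vector. -/
open scoped ENNReal NNReal Classical
open Filter MeasureTheory

theorem aux_add (G : DirGraph) (F : G.E → ℝ) (β : ℝ) (m n : ℕ) (u x w : G.V) :
    G.Apow F β m u x * G.Apow F β n x w ≤ G.Apow F β (m + n) u w := by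
  induction m generalizing u with
  | zero =>
    by_cases h : u = x
    · subst h; simp [DirGraph.Apow]
    · simp [DirGraph.Apow, h]
  | succ m ih =>
    rw [show m + 1 + n = (m + n) + 1 by omega]
    simp only [DirGraph.Apow]
    rw [← ENNReal.tsum_mul_right]
    refine ENNReal.tsum_le_tsum fun y => ?_
    rw [mul_assoc]
    exact mul_le_mul_right (ih y) _

theorem aux_path (G : DirGraph) (F : G.E → ℝ) (β : ℝ) (μ : List G.E) (u w : G.V)
    (h : G.IsPathFrom μ u w) : G.Apow F β μ.length u w ≠ 0 := by
  induction μ generalizing u with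
  | nil => simp [DirGraph.Apow, h.2.2.2 rfl]
  | cons e μ ih =>
    obtain ⟨h1, h2, h3, -⟩ := h
    have hs : G.s e = u := h2 e (by simp)
    have ht : G.IsPathFrom μ (G.r e) w := by
      refine ⟨?_, ?_, ?_, ?_⟩
      · exact List.IsChain.tail h1
      · intro f hf
        exact ((List.isChain_cons.1 h1).1 f hf).symm
      · intro f hf
        cases μ with
        | nil => simp at hf
        | cons a l => exact h3 f (by simpa [List.getLast?_cons_cons] using hf)
      · rintro rfl
        exact h3 e (by simp)
    have hk := ih _ ht
    simp only [List.length_cons, DirGraph.Apow]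
    intro h0
    have h4 := ENNReal.tsum_eq_zero.1 h0 (G.r e)
    rcases mul_eq_zero.1 h4 with h5 | h5
    · have h6 := ENNReal.tsum_eq_zero.1 h5 ⟨e, hs, rfl⟩
      rw [ENNReal.ofReal_eq_zero] at h6
      exact absurd h6 (not_le.2 (Real.exp_pos _))
    · exact hk h5

theorem aux_harm (G : DirGraph) (F : G.E → ℝ) (β : ℝ) (ψ : G.V → ℝ≥0)
    (hψ : G.Harmonic F β ψ) (n : ℕ) (v : G.V) :
    ∑' w : G.V, G.Apow F β n v w * ψ w = (ψ v : ℝ≥0∞) := by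
  induction n generalizing v with
  | zero =>
    rw [tsum_eq_single v]
    · simp [DirGraph.Apow]
    · intro w hw
      simp [DirGraph.Apow, hw.symm]
  | succ n ih =>
    simp only [DirGraph.Apow, ← ENNReal.tsum_mul_right]
    rw [ENNReal.tsum_comm]
    simp only [mul_assoc, ENNReal.tsum_mul_left, ih]
    exact hψ v

theorem aux_fin (G : DirGraph) (hSC : G.StronglyConnected)
    (F : G.E → ℝ) (β : ℝ) (hT : G.Transient F β) (u w : G.V) :
    ∑' n : ℕ, G.Apow F β n u w ≠ ⊤ := by
  obtain ⟨μ, hμ⟩ := hSC w u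
  have hc := aux_path G F β μ w u hμ
  intro htop
  apply hT w
  rw [eq_top_iff, ← ENNReal.mul_top hc, ← htop, ← ENNReal.tsum_mul_left]
  refine (ENNReal.tsum_le_tsum fun n => aux_add G F β μ.length n w u w).trans ?_
  exact ENNReal.tsum_comp_le_tsum_of_injective
    (f := fun n => μ.length + n) (fun a b h => by simpa using h) (fun n => G.Apow F β n w w)

/-- on a finite strongly connected graph with `A(β)` transient there are
no nonzero harmonic vectors. -/
theorem stmt_7 (G : DirGraph) (hSC : G.StronglyConnected) (hfin : Finite G.V)
    (F : G.E → ℝ) (β : ℝ) (hT : G.Transient F β)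
    (ψ : G.V → ℝ≥0) (hψ : G.Harmonic F β ψ) : ψ = 0 := by
  have := Fintype.ofFinite G.V
  funext u
  by_contra hne
  have hne' : (ψ u : ℝ≥0∞) ≠ 0 := by simpa using hne
  have h1 : ∑' _ : ℕ, (ψ u : ℝ≥0∞) = ⊤ := ENNReal.tsum_const_eq_top_of_ne_zero hne'
  have h2 : ∑' n : ℕ, ∑' w : G.V, G.Apow F β n u w * ψ w = ⊤ := by
    simp only [aux_harm G F β ψ hψ]
    exact h1
  rw [ENNReal.tsum_comm, tsum_fintype] at h2
  refine (ENNReal.sum_ne_top.2 fun w _ => ?_) h2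
  rw [ENNReal.tsum_mul_right]
  exact ENNReal.mul_ne_top (aux_fin G hSC F β hT u w) ENNReal.coe_ne_top
end

section
/- Let G be a strongly connected countable directed graph, F : E → ℝ a function and β ∈ ℝ such that A(β) is transient. Let t = (tᵢ) be a β-summable exit path in G. Then the vector ψ defined by ψ_v = lim_{i→∞} t^β(i)^{−1} Σ_{n≥0} A(β)ⁿ_{v tᵢ} takes values in (0,∞) and is A(β)-harmonic. -/
open scoped ENNReal NNReal Classical
open Filter MeasureTheory

/-- The quantity `t^β(i)⁻¹ Σ_n A(β)ⁿ_{v tᵢ}` associated to an exit path `t`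
(indexed so that `t 0` is the first vertex `t₁` of the exit path). -/
noncomputable def DirGraph.exitTerm (G : DirGraph) (F : G.E → ℝ) (β : ℝ)
    (t : ℕ → G.V) (v : G.V) (i : ℕ) : ℝ≥0∞ :=
  (∏ j ∈ Finset.range i, G.Amat F β (t j) (t (j + 1)))⁻¹ * ∑' n : ℕ, G.Apow F β n v (t i)

namespace DirGraph

variable {G : DirGraph} {F : G.E → ℝ} {β : ℝ}

theorem amat_ne_zero (e : G.E) : G.Amat F β (G.s e) (G.r e) ≠ 0 := by
  intro h
  unfold Amat at h
  rw [ENNReal.tsum_eq_zero] at h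
  have := h ⟨e, rfl, rfl⟩
  rw [ENNReal.ofReal_eq_zero] at this
  exact absurd (Real.exp_pos (-β * F e)) (not_lt.mpr this)

theorem apow_add (m n : ℕ) (u w : G.V) :
    G.Apow F β (m + n) u w = ∑' x : G.V, G.Apow F β m u x * G.Apow F β n x w := by
  induction m generalizing u with
  | zero =>
    rw [tsum_eq_single u]
    · simp [Apow]
    · intro x hx
      simp [Apow, hx.symm]
  | succ m ih =>
    rw [Nat.add_right_comm]
    simp only [Apow]
    simp_rw [ih, ← ENNReal.tsum_mul_left, ← ENNReal.tsum_mul_right]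
    rw [ENNReal.tsum_comm]
    simp_rw [mul_assoc]

theorem apow_one (u w : G.V) : G.Apow F β 1 u w = G.Amat F β u w := by
  simp only [Apow]
  rw [tsum_eq_single w]
  · simp
  · intro x hx
    simp [hx]

theorem apow_pos (μ : List G.E) (u w : G.V) (h : G.IsPathFrom μ u w) :
    G.Apow F β μ.length u w ≠ 0 := by
  induction μ generalizing u with
  | nil =>
    have := h.2.2.2 rfl
    simp [Apow, this]
  | cons e l ih =>
    obtain ⟨h1, h2, h3, -⟩ := h
    have hs : G.s e = u := h2 e (by simp)
    have hl : G.IsPathFrom l (G.r e) w := by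
      unfold IsPath at h1
      refine ⟨?_, ?_, ?_, ?_⟩
      · exact (List.isChain_cons.mp h1).2
      · intro f hf
        exact ((List.isChain_cons.mp h1).1 f hf).symm
      · intro f hf
        apply h3 f
        cases l with
        | nil => simp at hf
        | cons a l => simpa [List.getLast?_cons_cons] using hf
      · rintro rfl
        exact h3 e (by simp)
    intro h0
    simp only [List.length_cons, Apow] at h0
    rw [ENNReal.tsum_eq_zero] at h0
    rcases mul_eq_zero.mp (h0 (G.r e)) with h | h
    · subst hs
      exact amat_ne_zero e h
    · exact ih _ hl h

theorem amat_ne_top (hSC : G.StronglyConnected) (hT : G.Transient F β) (x y : G.V) :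
    G.Amat F β x y ≠ ⊤ := by
  intro h
  obtain ⟨μ, hμ⟩ := hSC y x
  have h1 := apow_pos (F := F) (β := β) μ y x hμ
  apply hT x
  apply top_unique
  calc ⊤ = G.Amat F β x y * G.Apow F β μ.length y x := by
        rw [h, ENNReal.top_mul h1]
    _ ≤ G.Apow F β (μ.length + 1) x x :=
        ENNReal.le_tsum (f := fun z => G.Amat F β x z * G.Apow F β μ.length z x) y
    _ ≤ _ := ENNReal.le_tsum (f := fun n => G.Apow F β n x x) _

theorem green_mul_le (v x y : G.V) :
    (∑' n, G.Apow F β n v x) * G.Amat F β x y ≤ ∑' n, G.Apow F β n v y := by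
  rw [← ENNReal.tsum_mul_right]
  calc ∑' n, G.Apow F β n v x * G.Amat F β x y ≤ ∑' n, G.Apow F β (n + 1) v y := by
        apply ENNReal.tsum_le_tsum
        intro n
        rw [apow_add, ← apow_one]
        exact ENNReal.le_tsum (f := fun z => G.Apow F β n v z * G.Apow F β 1 z y) x
    _ ≤ _ := by
        rw [tsum_eq_zero_add' (f := fun n => G.Apow F β n v y) ENNReal.summable]
        exact le_add_self

theorem green_eq (v w : G.V) (h : v ≠ w) :
    ∑' n, G.Apow F β n v w = ∑' x, G.Amat F β v x * ∑' n, G.Apow F β n x w := by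
  rw [tsum_eq_zero_add' ENNReal.summable]
  simp_rw [← ENNReal.tsum_mul_left]
  rw [ENNReal.tsum_comm]
  simp [Apow, h]

theorem exitTerm_mono (hSC : G.StronglyConnected) (hT : G.Transient F β) (t : ℕ → G.V)
    (ht : G.IsExitPath t) (v : G.V) : Monotone (fun i => G.exitTerm F β t v i) := by
  apply monotone_nat_of_le_succ
  intro i
  unfold exitTerm
  have hA0 : G.Amat F β (t i) (t (i + 1)) ≠ 0 := by
    obtain ⟨e, h1, h2⟩ := ht.1 i
    rw [← h1, ← h2]
    exact amat_ne_zero e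
  have hA := amat_ne_top hSC hT (t i) (t (i + 1))
  rw [Finset.prod_range_succ, ENNReal.mul_inv (Or.inr hA) (Or.inr hA0), mul_assoc]
  gcongr
  calc ∑' n, G.Apow F β n v (t i)
      = (G.Amat F β (t i) (t (i + 1)))⁻¹ *
          ((∑' n, G.Apow F β n v (t i)) * G.Amat F β (t i) (t (i + 1))) := by
        rw [mul_comm (∑' n, G.Apow F β n v (t i)), ← mul_assoc,
          ENNReal.inv_mul_cancel hA0 hA, one_mul]
    _ ≤ _ := by
        gcongr
        exact green_mul_le _ _ _

end DirGraph

/-- the vector associated to a β-summable exit path is finite, strictly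
positive and `A(β)`-harmonic. -/
theorem stmt_8 (G : DirGraph) (hSC : G.StronglyConnected) (F : G.E → ℝ) (β : ℝ)
    (hT : G.Transient F β) (t : ℕ → G.V) (ht : G.IsExitPath t)
    (ψ : G.V → ℝ≥0∞)
    (hlim : ∀ v : G.V,
      Filter.Tendsto (fun i : ℕ => G.exitTerm F β t v i) Filter.atTop (nhds (ψ v)))
    (hfin : ∀ v : G.V, ψ v ≠ ⊤) :
    (∀ v : G.V, 0 < ψ v ∧ ψ v ≠ ⊤) ∧
    (∀ v : G.V, ∑' w : G.V, G.Amat F β v w * ψ w = ψ v) := by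
  have hmono := fun v => DirGraph.exitTerm_mono hSC hT t ht v
  refine ⟨fun v => ⟨?_, hfin v⟩, fun v => ?_⟩
  · have h0 : G.exitTerm F β t v 0 ≤ ψ v := (hmono v).ge_of_tendsto (hlim v) 0
    refine lt_of_lt_of_le ?_ h0
    obtain ⟨μ, hμ⟩ := hSC v (t 0)
    have h1 := DirGraph.apow_pos (F := F) (β := β) μ _ _ hμ
    simp only [DirGraph.exitTerm, Finset.range_zero, Finset.prod_empty, inv_one, one_mul]
    exact lt_of_lt_of_le (pos_iff_ne_zero.mpr h1)
      (ENNReal.le_tsum (f := fun n => G.Apow F β n v (t 0)) _)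
  · letI : MeasurableSpace G.V := ⊤
    have hA := fun w => DirGraph.amat_ne_top hSC hT v w
    have key : Tendsto (fun i => ∑' w, G.Amat F β v w * G.exitTerm F β t w i) atTop
        (nhds (∑' w, G.Amat F β v w * ψ w)) := by
      have := lintegral_tendsto_of_tendsto_of_monotone (μ := Measure.count)
        (f := fun i w => G.Amat F β v w * G.exitTerm F β t w i)
        (F := fun w => G.Amat F β v w * ψ w)
        (fun i => (measurable_from_top).aemeasurable)
        (Eventually.of_forall fun w i j hij => mul_le_mul_right (hmono w hij) _)
        (Eventually.of_forall fun w => ENNReal.Tendsto.const_mul (hlim w) (Or.inr (hA w)))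
      simpa only [lintegral_count] using this
    refine tendsto_nhds_unique (key.congr' ?_) (hlim v)
    obtain ⟨N, hN⟩ := ht.2 {v} (Set.finite_singleton v)
    filter_upwards [eventually_ge_atTop N] with i hi
    have hne : v ≠ t i := fun h => hN i hi h.symm
    unfold DirGraph.exitTerm
    rw [DirGraph.green_eq v (t i) hne, ← ENNReal.tsum_mul_left]
    congr 1
    ext w
    ring
end
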